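/- arXiv:2511.12863 — 9 statements merged into one kernel-verified Lean document; each statement's English description precedes it below -/
import Mathlib

section
/- Let z ∈ D_k and z' ∈ D_ℓ with k ≤ ℓ be ω-mutually dependent data sources, i.e., v(S ∪ {z}) = v(S) and v(S ∪ {z'}) = v(S) for every S ⊆ D \ {z, z'}. Then the Asymmetric Data Shapley value satisfies: if k = ℓ then φ^σ(z; v, D) = φ^σ(z'; v, D), and if k < ℓ then φ^σ(z; v, D) = 0. -/
open Finset

variable {α : Type*}

/-- Prefix union `U_t = D₁ ∪ ⋯ ∪ D_t` (groups are 0-indexed, so this is the union of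
the groups with index `< t`). -/
def prefixUnion [DecidableEq α] (Dg : ℕ → Finset α) (t : ℕ) : Finset α :=
  (Finset.range t).biUnion Dg

/-- Asymmetric Data Shapley value (subset form) of a source `z` belonging to group `Dg t`. -/
noncomputable def ADS [DecidableEq α] (Dg : ℕ → Finset α) (v : Finset α → ℝ) (t : ℕ)
    (z : α) : ℝ :=
  (1 / (Dg t).card) *
    ∑ S ∈ ((Dg t).erase z).powerset,
      ((((Dg t).card - 1).choose S.card : ℝ))⁻¹ *
        (v (prefixUnion Dg t ∪ S ∪ {z}) - v (prefixUnion Dg t ∪ S))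

/-- If `z` and `z'` are null on the coalitions of their group avoiding both of them, then only the
coalitions containing the other source contribute to the value of `z`. -/
theorem ADS_eq_sum_of_null_pair [DecidableEq α] (Dg : ℕ → Finset α) (v : Finset α → ℝ) (t : ℕ)
    {z z' : α} (hz' : z' ∈ Dg t) (hzz' : z ≠ z')
    (hnull : ∀ S ⊆ Dg t \ {z, z'},
      v (prefixUnion Dg t ∪ S ∪ {z}) = v (prefixUnion Dg t ∪ S) ∧
        v (prefixUnion Dg t ∪ S ∪ {z'}) = v (prefixUnion Dg t ∪ S)) :
    ADS Dg v t z = (1 / (Dg t).card) * ∑ S ∈ (Dg t \ {z, z'}).powerset,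
      ((((Dg t).card - 1).choose (S.card + 1) : ℝ))⁻¹ *
        (v (prefixUnion Dg t ∪ S ∪ {z, z'}) - v (prefixUnion Dg t ∪ S)) := by
  have hnot : z' ∉ Dg t \ {z, z'} := by simp
  have herase : (Dg t).erase z = insert z' (Dg t \ {z, z'}) := by
    ext x
    grind
  rw [ADS, herase, sum_powerset_insert hnot, sum_eq_zero, zero_add]
  · congr 1
    refine sum_congr rfl fun S hS => ?_
    have hS' := mem_powerset.mp hS
    have hpair : prefixUnion Dg t ∪ insert z' S ∪ {z} = prefixUnion Dg t ∪ S ∪ {z, z'} := by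
      ext x
      grind
    have hsingle : prefixUnion Dg t ∪ insert z' S = prefixUnion Dg t ∪ S ∪ {z'} := by
      ext x
      grind
    rw [card_insert_of_notMem fun h => hnot (hS' h), hpair, hsingle, (hnull S hS').2]
  · intro S hS
    rw [(hnull S (mem_powerset.mp hS)).1, sub_self, mul_zero]

/-- An element of a group belongs to no prefix union of strictly earlier groups. -/
theorem notMem_prefixUnion [DecidableEq α] {T : ℕ} {Dg : ℕ → Finset α}
    (hdisj : ∀ i < T, ∀ j < T, i ≠ j → Disjoint (Dg i) (Dg j))
    {t j : ℕ} (hj : j < T) (htj : t ≤ j) {x : α} (hx : x ∈ Dg j) : x ∉ prefixUnion Dg t := by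
  simp only [prefixUnion, mem_biUnion, mem_range, not_exists, not_and]
  intro i hi hxi
  exact disjoint_left.mp (hdisj i (by omega) j hj (by omega)) hxi hx

/-- If `z ∈ D_k` and `z' ∈ D_ℓ` with `k ≤ ℓ` are ω-mutually dependent (adding either of them
to any `S ⊆ D \ {z, z'}` leaves the utility unchanged), then the Asymmetric Data Shapley
value satisfies: `φ^σ(z) = φ^σ(z')` if `k = ℓ`, and `φ^σ(z) = 0` if `k < ℓ`. -/
theorem ads_intra_group_mutual_dependence [DecidableEq α]
    (T : ℕ) (hT : 1 ≤ T) (Dg : ℕ → Finset α)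
    (hdisj : ∀ i < T, ∀ j < T, i ≠ j → Disjoint (Dg i) (Dg j))
    (hne : ∀ j < T, (Dg j).Nonempty)
    (D : Finset α) (hD : D = (Finset.range T).biUnion Dg)
    (v : Finset α → ℝ)
    (k l : ℕ) (hk : k < T) (hl : l < T) (hkl : k ≤ l)
    (z z' : α) (hz : z ∈ Dg k) (hz' : z' ∈ Dg l)
    (hdep : ∀ S ⊆ D \ {z, z'}, v (S ∪ {z}) = v S ∧ v (S ∪ {z'}) = v S) :
    (k = l → ADS Dg v k z = ADS Dg v l z') ∧ (k < l → ADS Dg v k z = 0) := by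
  have hsub : ∀ S ⊆ Dg k \ {z, z'}, prefixUnion Dg k ∪ S ⊆ D \ {z, z'} := by
    intro S hS x hx
    have hzU := notMem_prefixUnion hdisj hk le_rfl hz
    have hzU' := notMem_prefixUnion hdisj hl hkl hz'
    have hxD : x ∈ D := by
      rw [hD, mem_biUnion]
      rcases mem_union.mp hx with hxU | hxS
      · obtain ⟨i, hi, hxi⟩ := mem_biUnion.mp hxU
        exact ⟨i, mem_range.mpr ((mem_range.mp hi).trans hk), hxi⟩
      · exact ⟨k, mem_range.mpr hk, (mem_sdiff.mp (hS hxS)).1⟩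
    grind
  have hnull := fun S hS => hdep _ (hsub S hS)
  refine ⟨?_, fun hlt => ?_⟩
  · rintro rfl
    rcases eq_or_ne z z' with rfl | hzz'
    · rfl
    rw [ADS_eq_sum_of_null_pair Dg v k hz' hzz' hnull,
      ADS_eq_sum_of_null_pair Dg v k hz hzz'.symm
        fun S hS => (hnull S (pair_comm z' z ▸ hS)).symm, pair_comm z' z]
  · have hz'k : z' ∉ Dg k := disjoint_right.mp (hdisj k hk l hl hlt.ne) hz'
    rw [ADS, sum_eq_zero, mul_zero]
    intro S hS
    have hS' : S ⊆ Dg k \ {z, z'} := by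
      intro x hx
      have := mem_powerset.mp hS hx
      grind
    rw [(hnull S hS').1, sub_self, mul_zero]
end

section
/- Suppose ψ assigns to every utility function u : Finset α → ℝ and every z ∈ D a real number ψ(u)(z) such that: (Efficiency) Σ_{z ∈ D} ψ(u)(z) = u(D) − u(∅) for every u; (Linearity) ψ(a·u₁ + b·u₂)(z) = a·ψ(u₁)(z) + b·ψ(u₂)(z) for all reals a, b, utilities u₁, u₂, and z ∈ D; (Nullity) if u(S ∪ {z}) = u(S) for every S ⊆ D \ {z} then ψ(u)(z) = 0; (Intra-Group Uniform Mutual Dependence) whenever z ∈ D_k and z' ∈ D_ℓ with k ≤ ℓ satisfy u(S ∪ {z}) = u(S) = u(S ∪ {z'}) for every S ⊆ D \ {z, z'}, one has ψ(u)(z) = ψ(u)(z') if k = ℓ and ψ(u)(z) = 0 if k < ℓ. Then ψ(u)(z) = φ^σ(z; u, D) for every utility u and every z ∈ D. -/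
open Finset

variable {α : Type*}

/-- Pascal-type recursion of the Beta weights `1 / ((b + 1) * C(b, s))`. -/
lemma beta_weight_recursion (b s : ℕ) (h : s ≤ b) :
    (1 / ((b + 1 : ℕ) + 1 : ℝ)) * ((b + 1).choose s : ℝ)⁻¹ +
      (1 / ((b + 1 : ℕ) + 1 : ℝ)) * ((b + 1).choose (s + 1) : ℝ)⁻¹ =
      (1 / ((b : ℝ) + 1)) * (b.choose s : ℝ)⁻¹ := by
  have hpos : (0 : ℝ) < b.choose s := by exact_mod_cast Nat.choose_pos h
  have hs : (s : ℝ) ≤ b := by exact_mod_cast h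
  have hleft : ((b + 1).choose s : ℝ) = (b + 1) * b.choose s / (b + 1 - s) := by
    have key := Nat.choose_mul_succ_eq b s
    rw [eq_div_iff (by linarith)]
    have hcast := congrArg (Nat.cast : ℕ → ℝ) key
    push_cast [Nat.cast_sub (Nat.le_succ_of_le h)] at hcast
    linarith
  have hright : ((b + 1).choose (s + 1) : ℝ) = (b + 1) * b.choose s / (s + 1) := by
    rw [eq_div_iff (by positivity)]
    exact_mod_cast (Nat.add_one_mul_choose_eq b s).symm
  have hbs : (b : ℝ) + 1 - s ≠ 0 := by linarith
  rw [hleft, hright]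
  push_cast
  field_simp
  ring

lemma sum_powerset_beta_weight [DecidableEq α] (C : Finset α) (a : ℕ) :
    ∑ S ∈ C.powerset, (1 / ((a + #C : ℕ) + 1 : ℝ)) * ((a + #C).choose (a + #S) : ℝ)⁻¹ =
      1 / ((a : ℝ) + 1) := by
  induction C using Finset.induction_on with
  | empty => simp
  | insert x C hx ih =>
    rw [Finset.sum_powerset_insert hx, ← Finset.sum_add_distrib, ← ih]
    refine Finset.sum_congr rfl fun S hS => ?_
    rw [Finset.mem_powerset] at hS
    rw [Finset.card_insert_of_notMem hx, Finset.card_insert_of_notMem fun h => hx (hS h),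
      ← add_assoc, ← add_assoc]
    exact beta_weight_recursion _ _ (by have := Finset.card_le_card hS; omega)

/-- Total Beta weight of the subsets of `B` that contain `A`. -/
lemma sum_beta_weight_of_subset [DecidableEq α] {A B : Finset α} (h : A ⊆ B) :
    (1 / ((#B : ℝ) + 1)) *
      ∑ S ∈ B.powerset, ((#B).choose #S : ℝ)⁻¹ * (if A ⊆ S then 1 else 0) =
      1 / ((#A : ℝ) + 1) := by
  have hIcc : B.powerset.filter (A ⊆ ·) = Finset.Icc A B := by
    ext S
    simp [and_comm]
  have hinj : Set.InjOn (A ∪ ·) ((B \ A).powerset : Set (Finset α)) := by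
    intro S hS S' hS' hEq
    simp only [Finset.coe_powerset, Set.mem_preimage, Set.mem_powerset_iff,
      Finset.coe_subset] at hS hS'
    have hd := Finset.disjoint_of_subset_left hS Finset.sdiff_disjoint
    have hd' := Finset.disjoint_of_subset_left hS' Finset.sdiff_disjoint
    rw [← Finset.union_sdiff_cancel_left hd.symm, ← Finset.union_sdiff_cancel_left hd'.symm]
    exact congrArg (· \ A) hEq
  have hcard : #A + #(B \ A) = #B := by
    rw [add_comm]
    exact Finset.card_sdiff_add_card_eq_card h
  simp only [mul_ite, mul_one, mul_zero]
  rw [← Finset.sum_filter, hIcc, Finset.Icc_eq_image_powerset h, Finset.sum_image hinj,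
    ← sum_powerset_beta_weight (B \ A) #A, Finset.mul_sum, hcard]
  refine Finset.sum_congr rfl fun S hS => ?_
  rw [Finset.mem_powerset] at hS
  rw [Finset.card_union_of_disjoint
    (Finset.disjoint_of_subset_left hS Finset.sdiff_disjoint).symm]

/-- Every set function is the sum over subsets of its Harsanyi dividends. -/
lemma exists_dividends (u : Finset α → ℝ) :
    ∃ c : Finset α → ℝ, ∀ S, u S = ∑ R ∈ S.powerset, c R := by
  classical
  let step : ∀ S : Finset α, (∀ R, R ⊂ S → ℝ) → ℝ := fun S ih =>
    u S - ∑ R ∈ S.ssubsets.attach, ih R.1 (Finset.mem_ssubsets.1 R.2)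
  refine ⟨fun S => Finset.strongInduction step S, fun S => ?_⟩
  rw [← Finset.add_sum_erase _ _ (Finset.mem_powerset_self S), Finset.strongInduction_eq]
  simp only [step]
  rw [Finset.sum_attach S.ssubsets fun R => Finset.strongInduction step R]
  simp [Finset.ssubsets, step]

/-- The unanimity game of `R`. -/
noncomputable def unanimity [DecidableEq α] (R S : Finset α) : ℝ := if R ⊆ S then 1 else 0

/-- A linear functional on games that only sees subsets of `D` is determined by its values on
the unanimity games of `D`. -/
lemma linear_eq_zero_of_unanimity [DecidableEq α] (D : Finset α)
    (F : (Finset α → ℝ) →ₗ[ℝ] ℝ)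
    (hlocal : ∀ w : Finset α → ℝ, (∀ S ⊆ D, w S = 0) → F w = 0)
    (hunan : ∀ R ⊆ D, F (unanimity R) = 0) (u : Finset α → ℝ) : F u = 0 := by
  obtain ⟨c, hc⟩ := exists_dividends u
  have hdiff : F (u - ∑ R ∈ D.powerset, c R • unanimity R) = 0 := by
    refine hlocal _ fun S hS => ?_
    have hfilter : D.powerset.filter (· ⊆ S) = S.powerset := by
      ext R
      simp only [Finset.mem_filter, Finset.mem_powerset]
      exact ⟨fun h => h.2, fun h => ⟨h.trans hS, h⟩⟩
    simp [unanimity, Finset.sum_apply, ← Finset.sum_filter, hfilter, hc S]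
  rw [map_sub, map_sum, sub_eq_zero] at hdiff
  rw [hdiff]
  refine Finset.sum_eq_zero fun R hR => ?_
  rw [map_smul, hunan R (Finset.mem_powerset.1 hR), smul_zero]

lemma ADS_linear [DecidableEq α] (Dg : ℕ → Finset α) (t : ℕ) (z : α) (a b : ℝ)
    (u₁ u₂ : Finset α → ℝ) :
    ADS Dg (fun S => a * u₁ S + b * u₂ S) t z = a * ADS Dg u₁ t z + b * ADS Dg u₂ t z := by
  simp only [ADS, Finset.mul_sum, ← Finset.sum_add_distrib]
  exact Finset.sum_congr rfl fun S _ => by ring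

lemma ADS_eq_zero_of_marginal [DecidableEq α] {Dg : ℕ → Finset α} {v : Finset α → ℝ}
    {t : ℕ} {z : α}
    (h : ∀ S ⊆ (Dg t).erase z,
      v (prefixUnion Dg t ∪ S ∪ {z}) = v (prefixUnion Dg t ∪ S)) :
    ADS Dg v t z = 0 := by
  rw [ADS, Finset.sum_eq_zero, mul_zero]
  intro S hS
  rw [h S (Finset.mem_powerset.1 hS), sub_self, mul_zero]

lemma unanimity_union_singleton_of_notMem [DecidableEq α] {R : Finset α} {z : α} (hz : z ∉ R)
    (S : Finset α) : unanimity R (S ∪ {z}) = unanimity R S := by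
  have : R ⊆ S ∪ {z} ↔ R ⊆ S := by
    refine ⟨fun h x hx => ?_, fun h => h.trans Finset.subset_union_left⟩
    have := h hx
    grind
  simp only [unanimity, this]

lemma unanimity_of_notMem [DecidableEq α] {R S : Finset α} {x : α} (hx : x ∈ R) (hS : x ∉ S) :
    unanimity R S = 0 :=
  if_neg fun h => hS (h hx)

/-- The ADS value of a member `z` of `R` in the last group that meets `R`. -/
lemma ADS_unanimity [DecidableEq α] {Dg : ℕ → Finset α} {t : ℕ} {z : α} {R : Finset α}
    (hz : z ∈ Dg t) (hzR : z ∈ R) (hzU : z ∉ prefixUnion Dg t)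
    (hdisj : Disjoint (prefixUnion Dg t) (Dg t)) (hR : R ⊆ prefixUnion Dg t ∪ Dg t) :
    ADS Dg (unanimity R) t z = 1 / (#(R ∩ Dg t) : ℝ) := by
  have hmem : z ∈ R ∩ Dg t := Finset.mem_inter.2 ⟨hzR, hz⟩
  have hsub : (R ∩ Dg t).erase z ⊆ (Dg t).erase z :=
    Finset.erase_subset_erase _ Finset.inter_subset_right
  have hcardD : (#(Dg t) : ℝ) = #((Dg t).erase z) + 1 := by
    exact_mod_cast (Finset.card_erase_add_one hz).symm
  have hcardR : (#(R ∩ Dg t) : ℝ) = #((R ∩ Dg t).erase z) + 1 := by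
    exact_mod_cast (Finset.card_erase_add_one hmem).symm
  rw [hcardR, ← sum_beta_weight_of_subset hsub, ADS, hcardD, ← Finset.card_erase_of_mem hz]
  congr 1
  refine Finset.sum_congr rfl fun S hS => ?_
  rw [Finset.mem_powerset] at hS
  have hzS : z ∉ S := fun h => Finset.notMem_erase z _ (hS h)
  rw [unanimity_of_notMem hzR (S := prefixUnion Dg t ∪ S) (by simp [hzU, hzS]), sub_zero,
    unanimity]
  congr 2
  refine propext ⟨fun h x hx => ?_, fun h x hx => ?_⟩
  · have hx' := Finset.mem_erase.1 hx
    have hxD := (Finset.mem_inter.1 hx'.2).2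
    have hxU : x ∉ prefixUnion Dg t := fun hU => Finset.disjoint_left.1 hdisj hU hxD
    have := h (Finset.mem_inter.1 hx'.2).1
    simp only [Finset.mem_union, Finset.mem_singleton] at this
    tauto
  · have hxUD := hR hx
    have := @h x
    simp only [Finset.mem_union, Finset.mem_singleton, Finset.mem_erase, Finset.mem_inter] at *
    tauto

/-- Axiomatic uniqueness: any allocation rule `ψ` satisfying Efficiency, Linearity, Nullity,
and Intra-Group Uniform Mutual Dependence coincides with the Asymmetric Data Shapley value. -/
theorem ads_axiomatic_uniqueness [DecidableEq α]
    (T : ℕ) (hT : 1 ≤ T) (Dg : ℕ → Finset α)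
    (hdisj : ∀ i < T, ∀ j < T, i ≠ j → Disjoint (Dg i) (Dg j))
    (hne : ∀ j < T, (Dg j).Nonempty)
    (D : Finset α) (hD : D = (Finset.range T).biUnion Dg)
    (ψ : (Finset α → ℝ) → α → ℝ)
    (heff : ∀ u : Finset α → ℝ, ∑ z ∈ D, ψ u z = u D - u ∅)
    (hlin : ∀ (a b : ℝ) (u₁ u₂ : Finset α → ℝ), ∀ z ∈ D,
      ψ (fun S => a * u₁ S + b * u₂ S) z = a * ψ u₁ z + b * ψ u₂ z)
    (hnull : ∀ (u : Finset α → ℝ), ∀ z ∈ D,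
      (∀ S ⊆ D \ {z}, u (S ∪ {z}) = u S) → ψ u z = 0)
    (hmutual : ∀ (u : Finset α → ℝ) (k l : ℕ), k < T → l < T → k ≤ l →
      ∀ z ∈ Dg k, ∀ z' ∈ Dg l,
        (∀ S ⊆ D \ {z, z'}, u (S ∪ {z}) = u S ∧ u (S ∪ {z'}) = u S) →
        (k = l → ψ u z = ψ u z') ∧ (k < l → ψ u z = 0)) :
    ∀ (u : Finset α → ℝ) (t : ℕ), t < T → ∀ z ∈ Dg t, ψ u z = ADS Dg u t z := by
  intro u t ht z hz
  have hsubD : ∀ k < T, Dg k ⊆ D := fun k hk =>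
    hD ▸ Finset.subset_biUnion_of_mem Dg (Finset.mem_range.2 hk)
  have hgroup : ∀ x ∈ D, ∃ k < T, x ∈ Dg k := by simp [hD]
  have hUD : prefixUnion Dg t ⊆ D := by
    rw [hD, prefixUnion]
    exact Finset.biUnion_subset_biUnion_of_subset_left _ (Finset.range_subset_range.2 ht.le)
  have hdisjU : Disjoint (prefixUnion Dg t) (Dg t) := by
    rw [prefixUnion, Finset.disjoint_biUnion_left]
    intro k hk
    have hkt := Finset.mem_range.1 hk
    exact hdisj k (hkt.trans ht) t ht hkt.ne
  have hzU : z ∉ prefixUnion Dg t := fun h => Finset.disjoint_left.1 hdisjU h hz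
  have hzD : z ∈ D := hsubD t ht hz
  let F : (Finset α → ℝ) →ₗ[ℝ] ℝ :=
    { toFun := fun w => ψ w z - ADS Dg w t z
      map_add' := fun w₁ w₂ => by
        have h₁ := hlin 1 1 w₁ w₂ z hzD
        have h₂ := ADS_linear Dg t z 1 1 w₁ w₂
        simp only [one_mul] at h₁ h₂
        change ψ (fun S => w₁ S + w₂ S) z - ADS Dg (fun S => w₁ S + w₂ S) t z = _
        rw [h₁, h₂]
        ring
      map_smul' := fun a w => by
        have h₁ := hlin a 0 w w z hzD
        have h₂ := ADS_linear Dg t z a 0 w w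
        simp only [zero_mul, add_zero] at h₁ h₂
        change ψ (fun S => a * w S) z - ADS Dg (fun S => a * w S) t z =
          a * (ψ w z - ADS Dg w t z)
        rw [h₁, h₂]
        ring }
  refine sub_eq_zero.1 (linear_eq_zero_of_unanimity D F (fun w hw => ?_) (fun R hRD => ?_) u)
  · change ψ w z - ADS Dg w t z = 0
    rw [hnull w z hzD, ADS_eq_zero_of_marginal, sub_zero]
    · intro S hS
      have hSD : prefixUnion Dg t ∪ S ⊆ D :=
        Finset.union_subset hUD ((hS.trans (Finset.erase_subset _ _)).trans (hsubD t ht))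
      rw [hw _ hSD, hw _ (Finset.union_subset hSD (Finset.singleton_subset_iff.2 hzD))]
    · intro S hS
      have hSD : S ⊆ D := hS.trans Finset.sdiff_subset
      rw [hw _ hSD, hw _ (Finset.union_subset hSD (Finset.singleton_subset_iff.2 hzD))]
  change ψ (unanimity R) z - ADS Dg (unanimity R) t z = 0
  have hnullR : ∀ x ∈ D, x ∉ R → ψ (unanimity R) x = 0 := fun x hx hxR =>
    hnull _ x hx fun S _ => unanimity_union_singleton_of_notMem hxR S
  by_cases hzR : z ∈ R
  swap
  · rw [hnullR z hzD hzR, ADS_eq_zero_of_marginal, sub_zero]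
    exact fun S _ => unanimity_union_singleton_of_notMem hzR _
  have hdep : ∀ x ∈ R, ∀ y ∈ R, x ≠ y → ∀ S ⊆ D \ {x, y},
      unanimity R (S ∪ {x}) = unanimity R S ∧ unanimity R (S ∪ {y}) = unanimity R S := by
    intro x hx y hy hxy S hS
    have hxS : x ∉ S := fun h => by simpa using hS h
    have hyS : y ∉ S := fun h => by simpa using hS h
    rw [unanimity_of_notMem hx hxS, unanimity_of_notMem hy (S := S ∪ {x}) (by grind),
      unanimity_of_notMem hx (S := S ∪ {y}) (by grind)]
    exact ⟨rfl, rfl⟩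
  have hlower : ∀ k l, k < l → l < T → ∀ x ∈ Dg k, x ∈ R → ∀ y ∈ Dg l, y ∈ R →
      ψ (unanimity R) x = 0 := by
    intro k l hkl hl x hx hxR y hy hyR
    have hxy : x ≠ y := fun h =>
      Finset.disjoint_left.1 (hdisj k (hkl.trans hl) l hl hkl.ne) hx (h ▸ hy)
    exact (hmutual _ k l (hkl.trans hl) hl hkl.le x hx y hy (hdep x hxR y hyR hxy)).2 hkl
  by_cases hR : R ⊆ prefixUnion Dg t ∪ Dg t
  swap
  · obtain ⟨y, hyR, hy⟩ := Finset.not_subset.1 hR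
    obtain ⟨l, hl, hyl⟩ := hgroup y (hRD hyR)
    rw [Finset.mem_union, not_or] at hy
    have htl : t < l := by
      by_contra! hlt
      rcases hlt.lt_or_eq with h | rfl
      · exact hy.1 (Finset.mem_biUnion.2 ⟨l, Finset.mem_range.2 h, hyl⟩)
      · exact hy.2 hyl
    rw [hlower t l htl hl z hz hzR y hyl hyR, ADS_eq_zero_of_marginal, sub_zero]
    intro S hS
    have hyS : y ∉ S := fun h => hy.2 (Finset.mem_of_mem_erase (hS h))
    have hyz : y ≠ z := fun h => hy.2 (h ▸ hz)
    rw [unanimity_of_notMem hyR (by simp [hy.1, hyS, hyz]),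
      unanimity_of_notMem hyR (by simp [hy.1, hyS])]
  have hmem : z ∈ R ∩ Dg t := Finset.mem_inter.2 ⟨hzR, hz⟩
  have hsum : ∑ x ∈ R ∩ Dg t, ψ (unanimity R) x = 1 := by
    rw [Finset.sum_subset (Finset.inter_subset_right.trans (hsubD t ht)), heff,
      unanimity_of_notMem hzR (Finset.notMem_empty z), sub_zero, unanimity, if_pos hRD]
    intro x hxD hx
    by_cases hxR : x ∈ R
    · have hxt : x ∉ Dg t := fun h => hx (Finset.mem_inter.2 ⟨hxR, h⟩)
      have hxU := (Finset.mem_union.1 (hR hxR)).resolve_right hxt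
      obtain ⟨k, hk, hxk⟩ := Finset.mem_biUnion.1 hxU
      exact hlower k t (Finset.mem_range.1 hk) ht x hxk hxR z hz hzR
    · exact hnullR x hxD hxR
  have hconst : ∀ x ∈ R ∩ Dg t, ψ (unanimity R) x = ψ (unanimity R) z := by
    intro x hx
    rw [Finset.mem_inter] at hx
    by_cases hxz : x = z
    · rw [hxz]
    · exact (hmutual _ t t ht ht le_rfl x hx.2 z hz (hdep x hx.1 z hzR hxz)).1 rfl
  have hpos : (#(R ∩ Dg t) : ℝ) ≠ 0 :=
    Nat.cast_ne_zero.2 (Finset.card_ne_zero_of_mem hmem)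
  rw [Finset.sum_congr rfl hconst, Finset.sum_const, nsmul_eq_mul] at hsum
  rw [ADS_unanimity hz hzR hzU hdisjU hR, sub_eq_zero, eq_div_iff hpos, mul_comm]
  exact hsum
end

section
/- For every t ∈ {1, …, T} and every z ∈ D_t, the uniform average of one-step marginal contributions over ordered permutations equals the subset form: (1/∏_{j=1}^{T} |D_j|!) · Σ_{π ∈ R^σ(D)} (v(π^{<z} ∪ {z}) − v(π^{<z})) = φ^σ(z; v, D). -/
open Finset

variable {α : Type*}

/-- A list `π` respects the ordered groups `σ = (D₁, …, D_T)` if it is the concatenation,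
in group order, of a duplicate-free enumeration of each group. -/
def Respects [DecidableEq α] (Dg : ℕ → Finset α) (T : ℕ) (π : List α) : Prop :=
  ∃ Ls : Fin T → List α,
    (∀ j : Fin T, (Ls j).Nodup ∧ (Ls j).toFinset = Dg j.1) ∧
    π = (List.ofFn Ls).flatten

/-- `R^σ(D)`: the finite set of duplicate-free lists enumerating `D` that respect the
group order `σ`. -/
noncomputable def Rsigma [DecidableEq α] (Dg : ℕ → Finset α) (T : ℕ) (D : Finset α) :
    Finset (List α) :=
  @Finset.filter _ (Respects Dg T) (Classical.decPred _) D.toList.permutations.toFinset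

/-- `π^{<z}`: the finite set of elements strictly preceding `z` in the list `π`. -/
def predSet [DecidableEq α] (π : List α) (z : α) : Finset α :=
  (π.takeWhile (fun a => a ≠ z)).toFinset

/-- The finite set of duplicate-free lists enumerating `s`. -/
noncomputable def enumerations [DecidableEq α] (s : Finset α) : Finset (List α) :=
  s.toList.permutations.toFinset

theorem mem_enumerations [DecidableEq α] {s : Finset α} {l : List α} :
    l ∈ enumerations s ↔ l.Nodup ∧ l.toFinset = s := by
  rw [enumerations, List.mem_toFinset, List.mem_permutations]
  constructor
  · intro h
    exact ⟨h.nodup_iff.2 s.nodup_toList, by rw [List.toFinset_eq_of_perm _ _ h, Finset.toList_toFinset]⟩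
  · rintro ⟨hl, rfl⟩
    exact List.perm_of_nodup_nodup_toFinset_eq hl (nodup_toList _) (by simp)

theorem card_enumerations [DecidableEq α] (s : Finset α) :
    (enumerations s).card = s.card.factorial := by
  rw [enumerations, List.toFinset_card_of_nodup (List.nodup_permutations _ s.nodup_toList),
    List.length_permutations, length_toList]

theorem length_of_mem_enumerations [DecidableEq α] {s : Finset α} {l : List α}
    (hl : l ∈ enumerations s) : l.length = s.card := by
  obtain ⟨hnd, rfl⟩ := mem_enumerations.1 hl
  exact (List.toFinset_card_of_nodup hnd).symm

theorem predSet_append_cons [DecidableEq α] {a b : List α} {z : α} (ha : z ∉ a) :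
    predSet (a ++ z :: b) z = a.toFinset := by
  rw [predSet, List.takeWhile_append_of_pos]
  · simp
  · intro x hx
    simpa using ne_of_mem_of_not_mem hx ha

theorem predSet_append_append [DecidableEq α] {a l b : List α} {z : α}
    (ha : z ∉ a) (hl : z ∈ l) :
    predSet (a ++ (l ++ b)) z = a.toFinset ∪ predSet l z := by
  obtain ⟨p, q, rfl, hp⟩ := List.eq_append_cons_of_mem hl
  have h : a ++ (p ++ z :: q ++ b) = (a ++ p) ++ z :: (q ++ b) := by simp
  rw [h, predSet_append_cons (by simp [ha, hp]), predSet_append_cons hp, List.toFinset_append]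

/-- The number of enumerations of `s` in which the predecessors of `z` form the set `S`. -/
theorem card_filter_predSet_eq [DecidableEq α] {s S : Finset α} {z : α} (hz : z ∈ s)
    (hS : S ⊆ s.erase z) :
    ((enumerations s).filter (fun l => predSet l z = S)).card =
      S.card.factorial * (s.card - 1 - S.card).factorial := by
  have hzS : z ∉ S := fun h => by simpa using hS h
  rw [← card_erase_of_mem hz, ← card_sdiff_of_subset hS, ← card_enumerations S,
    ← card_enumerations (s.erase z \ S), ← card_product]
  symm
  refine card_bij (fun p _ => p.1 ++ z :: p.2) ?_ ?_ ?_
  · rintro ⟨a, b⟩ h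
    simp only [mem_product, mem_enumerations] at h
    obtain ⟨⟨ha, rfl⟩, hb, hbs⟩ := h
    have hb' : ∀ x, x ∈ b ↔ (x ≠ z ∧ x ∈ s) ∧ x ∉ a := fun x => by
      rw [← List.mem_toFinset, hbs]; simp
    have ha' : ∀ x ∈ a, x ≠ z ∧ x ∈ s := fun x hx => by
      simpa using hS (List.mem_toFinset.2 hx)
    rw [mem_filter, mem_enumerations]
    refine ⟨⟨?_, ?_⟩, predSet_append_cons (by simpa using hzS)⟩
    · rw [List.nodup_append]
      refine ⟨ha, List.nodup_cons.2 ⟨by simp [hb'], hb⟩, ?_⟩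
      intro x hx y hy
      grind
    · ext x
      simp only [List.mem_toFinset, List.mem_append, List.mem_cons, hb']
      grind
  · rintro ⟨a, b⟩ h ⟨c, d⟩ h' heq
    simp only [mem_product] at h h'
    have := List.append_inj heq
      ((length_of_mem_enumerations h.1).trans (length_of_mem_enumerations h'.1).symm)
    simp_all
  · intro l hl
    rw [mem_filter, mem_enumerations] at hl
    obtain ⟨⟨hnd, rfl⟩, hp⟩ := hl
    obtain ⟨p, q, rfl, hzp⟩ := List.eq_append_cons_of_mem (List.mem_toFinset.1 hz)
    rw [predSet_append_cons hzp] at hp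
    subst hp
    refine ⟨(p, q), ?_, rfl⟩
    rw [List.nodup_append, List.nodup_cons] at hnd
    simp only [mem_product, mem_enumerations]
    refine ⟨⟨hnd.1, trivial⟩, hnd.2.1.2, ?_⟩
    ext x
    simp only [List.mem_toFinset, mem_sdiff, mem_erase, List.mem_append, List.mem_cons]
    grind

theorem predSet_subset_erase [DecidableEq α] {s : Finset α} {l : List α} {z : α}
    (hl : l.toFinset = s) : predSet l z ⊆ s.erase z := by
  intro x hx
  rw [predSet, List.mem_toFinset] at hx
  rw [mem_erase, ← hl, List.mem_toFinset]
  exact ⟨by simpa using List.mem_takeWhile_imp hx, (List.takeWhile_prefix _).subset hx⟩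

theorem sum_enumerations_predSet [DecidableEq α] {s : Finset α} {z : α} (hz : z ∈ s)
    (f : Finset α → ℝ) :
    ∑ l ∈ enumerations s, f (predSet l z) =
      ∑ S ∈ (s.erase z).powerset,
        ((S.card.factorial * (s.card - 1 - S.card).factorial : ℕ) : ℝ) * f S := by
  rw [← sum_fiberwise_of_maps_to (g := fun l => predSet l z) (t := (s.erase z).powerset)
    (fun l hl => mem_powerset.2 (predSet_subset_erase (mem_enumerations.1 hl).2))]
  refine sum_congr rfl fun S hS => ?_
  rw [← card_filter_predSet_eq hz (mem_powerset.1 hS), ← nsmul_eq_mul, ← sum_const]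
  exact sum_congr rfl fun l hl => by rw [(mem_filter.1 hl).2]

theorem Rsigma_eq_image [DecidableEq α] {T : ℕ} {Dg : ℕ → Finset α}
    (hdisj : ∀ i < T, ∀ j < T, i ≠ j → Disjoint (Dg i) (Dg j)) :
    Rsigma Dg T ((range T).biUnion Dg) =
      (Fintype.piFinset fun j : Fin T => enumerations (Dg j)).image
        fun Ls => (List.ofFn Ls).flatten := by
  ext π
  rw [Rsigma, @mem_filter _ _ (Classical.decPred _), ← enumerations, mem_enumerations, mem_image]
  simp only [Fintype.mem_piFinset, mem_enumerations]
  constructor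
  · rintro ⟨-, Ls, hLs, rfl⟩
    exact ⟨Ls, hLs, rfl⟩
  · rintro ⟨Ls, hLs, rfl⟩
    have hmem : ∀ (j : Fin T) x, x ∈ Ls j ↔ x ∈ Dg j := fun j x => by
      rw [← (hLs j).2, List.mem_toFinset]
    refine ⟨⟨?_, ?_⟩, Ls, hLs, rfl⟩
    · rw [List.nodup_flatten]
      refine ⟨by simpa [List.mem_ofFn] using fun j => (hLs j).1, ?_⟩
      rw [List.pairwise_ofFn]
      intro i j hij x hi hj
      exact disjoint_left.1 (hdisj i i.2 j j.2 (by simpa [Fin.ext_iff] using hij.ne))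
        ((hmem i x).1 hi) ((hmem j x).1 hj)
    · ext x
      simp [List.mem_ofFn, hmem, Fin.exists_iff]

theorem injOn_flatten_ofFn [DecidableEq α] {T : ℕ} {Dg : ℕ → Finset α} :
    Set.InjOn (fun Ls : Fin T → List α => (List.ofFn Ls).flatten)
      (Fintype.piFinset fun j : Fin T => enumerations (Dg j)) := by
  intro Ls hL Ms hM h
  rw [mem_coe, Fintype.mem_piFinset] at hL hM
  refine List.ofFn_injective (List.eq_iff_flatten_eq.2 ⟨h, ?_⟩)
  rw [List.map_ofFn, List.map_ofFn]
  congr 1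
  funext j
  simp [length_of_mem_enumerations (hL j), length_of_mem_enumerations (hM j)]

theorem predSet_flatten_ofFn [DecidableEq α] {T : ℕ} {Dg : ℕ → Finset α}
    (hdisj : ∀ i < T, ∀ j < T, i ≠ j → Disjoint (Dg i) (Dg j)) {t : Fin T} {z : α}
    (hz : z ∈ Dg t) {Ls : Fin T → List α} (hLs : ∀ j, (Ls j).toFinset = Dg j) :
    predSet (List.ofFn Ls).flatten z = prefixUnion Dg t ∪ predSet (Ls t) z := by
  have hprefix : ((List.ofFn Ls).take t).flatten.toFinset = prefixUnion Dg t := by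
    ext x
    simp only [List.mem_toFinset, List.mem_flatten, List.mem_take_iff_getElem, prefixUnion,
      mem_biUnion, mem_range, List.getElem_ofFn, List.length_ofFn]
    constructor
    · rintro ⟨l, ⟨i, hi, rfl⟩, hx⟩
      exact ⟨i, by omega, by rwa [← hLs ⟨i, by omega⟩, List.mem_toFinset]⟩
    · rintro ⟨i, hi, hx⟩
      exact ⟨_, ⟨i, by omega, rfl⟩, by rwa [← List.mem_toFinset, hLs ⟨i, by omega⟩]⟩
  have hsplit : (List.ofFn Ls).flatten = ((List.ofFn Ls).take t).flatten ++
      (Ls t ++ ((List.ofFn Ls).drop (t + 1)).flatten) := by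
    conv_lhs => rw [← List.take_append_drop t (List.ofFn Ls),
      List.drop_eq_getElem_cons (by simp)]
    simp
  rw [hsplit, predSet_append_append, hprefix]
  · rw [← List.mem_toFinset, hprefix, prefixUnion, mem_biUnion]
    rintro ⟨i, hi, hzi⟩
    have hi := mem_range.1 hi
    exact disjoint_left.1 (hdisj i (by omega) t t.2 (by omega)) hzi hz
  · rwa [← List.mem_toFinset, hLs]

theorem sum_piFinset_apply_eq_mul {ι : Type*} {β : Type*} [Fintype ι] [DecidableEq ι]
    (s : ι → Finset β) (i : ι) (f : β → ℝ) :
    ∑ g ∈ Fintype.piFinset s, f (g i) =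
      (∏ j ∈ univ.erase i, ((s j).card : ℝ)) * ∑ b ∈ s i, f b := by
  have h := prod_univ_sum s (fun j b => if j = i then f b else 1)
  rw [← mul_prod_erase univ _ (mem_univ i)] at h
  simp only [prod_ite_eq', mem_univ, if_true] at h
  rw [← h, mul_comm]
  congr 1
  refine prod_congr rfl fun j hj => ?_
  simp [(mem_erase.1 hj).1]

/-- The uniform average of one-step marginal contributions over ordered permutations
respecting `σ` equals the subset form of the Asymmetric Data Shapley value. -/
theorem ads_permutation_eq_subset_form [DecidableEq α]
    (T : ℕ) (hT : 1 ≤ T) (Dg : ℕ → Finset α)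
    (hdisj : ∀ i < T, ∀ j < T, i ≠ j → Disjoint (Dg i) (Dg j))
    (hne : ∀ j < T, (Dg j).Nonempty)
    (D : Finset α) (hD : D = (Finset.range T).biUnion Dg)
    (v : Finset α → ℝ)
    (t : ℕ) (ht : t < T) (z : α) (hz : z ∈ Dg t) :
    (1 / ∏ j ∈ Finset.range T, (((Dg j).card).factorial : ℝ)) *
        ∑ π ∈ Rsigma Dg T D, (v (predSet π z ∪ {z}) - v (predSet π z)) =
      ADS Dg v t z := by
  subst hD
  have hzc : 0 < (Dg t).card := card_pos.2 ⟨z, hz⟩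
  rw [Rsigma_eq_image hdisj, sum_image injOn_flatten_ofFn]
  have hsum : ∀ Ls ∈ Fintype.piFinset fun j : Fin T => enumerations (Dg j),
      v (predSet (List.ofFn Ls).flatten z ∪ {z}) - v (predSet (List.ofFn Ls).flatten z) =
        v (prefixUnion Dg t ∪ predSet (Ls ⟨t, ht⟩) z ∪ {z}) -
          v (prefixUnion Dg t ∪ predSet (Ls ⟨t, ht⟩) z) := fun Ls hLs => by
    rw [predSet_flatten_ofFn (t := ⟨t, ht⟩) hdisj hz
      fun j => (mem_enumerations.1 (Fintype.mem_piFinset.1 hLs j)).2]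
  rw [sum_congr rfl hsum, sum_piFinset_apply_eq_mul _ (⟨t, ht⟩ : Fin T) fun l =>
      v (prefixUnion Dg t ∪ predSet l z ∪ {z}) - v (prefixUnion Dg t ∪ predSet l z),
    sum_enumerations_predSet hz fun S =>
      v (prefixUnion Dg t ∪ S ∪ {z}) - v (prefixUnion Dg t ∪ S),
    ← Fin.prod_univ_eq_prod_range (fun j => ((Dg j).card.factorial : ℝ)) T,
    ← mul_prod_erase univ _ (mem_univ (⟨t, ht⟩ : Fin T)), ADS]
  simp only [card_enumerations]
  have hP : ∏ j ∈ univ.erase (⟨t, ht⟩ : Fin T), ((Dg j).card.factorial : ℝ) ≠ 0 :=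
    prod_ne_zero_iff.2 fun j _ => by positivity
  rw [← mul_assoc, one_div, mul_inv, inv_mul_cancel_right₀ hP, mul_sum, mul_sum]
  refine sum_congr rfl fun S hS => ?_
  have hSc : S.card ≤ (Dg t).card - 1 := by
    rw [← card_erase_of_mem hz]
    exact card_le_card (mem_powerset.1 hS)
  have hchoose : (((Dg t).card - 1).choose S.card : ℝ) ≠ 0 :=
    Nat.cast_ne_zero.2 (Nat.choose_pos hSc).ne'
  have hfact : ((Dg t).card.factorial : ℝ) = (Dg t).card *
      (((Dg t).card - 1).choose S.card *
        (S.card.factorial * ((Dg t).card - 1 - S.card).factorial : ℕ)) := by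
    rw [← Nat.mul_factorial_pred hzc.ne', ← Nat.choose_mul_factorial_mul_factorial hSc]
    push_cast
    ring
  have hpos : ((S.card.factorial * ((Dg t).card - 1 - S.card).factorial : ℕ) : ℝ) ≠ 0 := by
    positivity
  rw [hfact]
  field_simp
end

section
/- (Group efficiency) For every t ∈ {1, …, T}, the sum of Asymmetric Data Shapley values over group D_t equals the incremental utility of that group relative to all preceding groups: Σ_{z ∈ D_t} φ^σ(z; v, D) = v(U_t) − v(U_{t−1}). -/
open Finset

variable {α : Type*}

/-- Summing `f` over the subsets of `A` that avoid `z`, and then over `z ∈ A`, counts each `S ⊆ A`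
once for every element of `A` outside `S`. -/
theorem sum_sum_powerset_erase [DecidableEq α] (A : Finset α) (f : Finset α → ℝ) :
    ∑ z ∈ A, ∑ S ∈ (A.erase z).powerset, f S =
      ∑ S ∈ A.powerset, ((#A : ℝ) - #S) * f S := by
  rw [Finset.sum_comm' (t' := A.powerset) (s' := fun S => A \ S)]
  · refine Finset.sum_congr rfl fun S hS => ?_
    rw [Finset.sum_const, nsmul_eq_mul, Finset.cast_card_sdiff (Finset.mem_powerset.mp hS)]
  · intro z S
    simp only [Finset.mem_powerset, Finset.mem_sdiff, Finset.subset_erase]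
    tauto

/-- Summing `f (insert z S)` over the subsets `S` of `A` that avoid `z`, and then over `z ∈ A`,
counts each `R ⊆ A` once for every element of `R`. -/
theorem sum_sum_powerset_erase_insert [DecidableEq α] (A : Finset α) (f : Finset α → ℝ) :
    ∑ z ∈ A, ∑ S ∈ (A.erase z).powerset, f (insert z S) =
      ∑ R ∈ A.powerset, (#R : ℝ) * f R := by
  have reindex : ∀ z ∈ A, ∑ S ∈ (A.erase z).powerset, f (insert z S) =
      ∑ R ∈ A.powerset with z ∈ R, f R := by
    intro z hz
    refine Finset.sum_nbij' (insert z) (fun R => R.erase z) ?_ ?_ ?_ ?_ (fun _ _ => rfl)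
    · intro S hS
      simp only [Finset.mem_powerset, Finset.subset_erase, Finset.mem_filter] at hS ⊢
      exact ⟨Finset.insert_subset hz hS.1, Finset.mem_insert_self z S⟩
    · intro R hR
      simp only [Finset.mem_powerset, Finset.mem_filter] at hR ⊢
      exact Finset.erase_subset_erase z hR.1
    · intro S hS
      simp only [Finset.mem_powerset, Finset.subset_erase] at hS
      exact Finset.erase_insert hS.2
    · intro R hR
      exact Finset.insert_erase (Finset.mem_filter.mp hR).2
  rw [Finset.sum_congr rfl reindex, Finset.sum_comm' (t' := A.powerset) (s' := fun R => R)]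
  · simp only [Finset.sum_const, nsmul_eq_mul]
  · intro z R
    simp only [Finset.mem_powerset, Finset.mem_filter]
    exact ⟨fun h => ⟨h.2.2, h.2.1⟩, fun h => ⟨h.2 h.1, h.2, h.1⟩⟩

theorem succ_mul_inv_choose {n k : ℕ} (hk : k < n) :
    ((k + 1 : ℕ) : ℝ) * ((n - 1).choose k : ℝ)⁻¹ = n * (n.choose (k + 1) : ℝ)⁻¹ := by
  obtain ⟨m, rfl⟩ : ∃ m, n = m + 1 := ⟨n - 1, by omega⟩
  have hm : (m.choose k : ℝ) ≠ 0 := by exact_mod_cast (Nat.choose_pos (by omega)).ne'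
  have hm' : ((m + 1).choose (k + 1) : ℝ) ≠ 0 := by
    exact_mod_cast (Nat.choose_pos (by omega)).ne'
  have h : ((m + 1 : ℕ) : ℝ) * m.choose k = (m + 1).choose (k + 1) * ((k + 1 : ℕ) : ℝ) := by
    exact_mod_cast Nat.add_one_mul_choose_eq m k
  rw [Nat.add_sub_cancel, ← div_eq_mul_inv, ← div_eq_mul_inv, div_eq_div_iff hm hm']
  linarith

theorem sub_mul_inv_choose {n k : ℕ} (hk : k < n) :
    ((n : ℝ) - k) * ((n - 1).choose k : ℝ)⁻¹ = n * (n.choose k : ℝ)⁻¹ := by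
  have h := succ_mul_inv_choose (n := n) (k := n - 1 - k) (by omega)
  rw [Nat.choose_symm (by omega), show n - 1 - k + 1 = n - k by omega,
    Nat.choose_symm hk.le, Nat.cast_sub hk.le] at h
  exact h

/-- Efficiency of the Shapley value of the game `w` on the player set `A`. -/
theorem shapley_efficiency [DecidableEq α] (A : Finset α) (w : Finset α → ℝ) :
    ∑ z ∈ A, ∑ S ∈ (A.erase z).powerset,
      ((#A - 1).choose #S : ℝ)⁻¹ * (w (insert z S) - w S) = #A * (w A - w ∅) := by
  have gain : ∑ z ∈ A, ∑ S ∈ (A.erase z).powerset,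
      ((#A - 1).choose #S : ℝ)⁻¹ * w (insert z S) =
      ∑ R ∈ A.powerset, (#R : ℝ) * (((#A - 1).choose (#R - 1) : ℝ)⁻¹ * w R) := by
    rw [← sum_sum_powerset_erase_insert]
    refine Finset.sum_congr rfl fun z _ => Finset.sum_congr rfl fun S hS => ?_
    simp only [Finset.mem_powerset, Finset.subset_erase] at hS
    rw [Finset.card_insert_of_notMem hS.2, Nat.add_sub_cancel]
  have gain_term : ∀ R ∈ A.powerset,
      (#R : ℝ) * (((#A - 1).choose (#R - 1) : ℝ)⁻¹ * w R) =
        #A * ((#A).choose #R : ℝ)⁻¹ * w R - if R = ∅ then #A * w ∅ else 0 := by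
    intro R hR
    split_ifs with h
    · simp [h]
    · have hpos : 0 < #R := Finset.card_pos.mpr (Finset.nonempty_iff_ne_empty.mpr h)
      have hle := Finset.card_le_card (Finset.mem_powerset.mp hR)
      have key := succ_mul_inv_choose (n := #A) (k := #R - 1) (by omega)
      rw [Nat.sub_add_cancel hpos] at key
      rw [← mul_assoc, key, sub_zero]
  have loss_term : ∀ S ∈ A.powerset,
      ((#A : ℝ) - #S) * (((#A - 1).choose #S : ℝ)⁻¹ * w S) =
        #A * ((#A).choose #S : ℝ)⁻¹ * w S - if S = A then #A * w A else 0 := by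
    intro S hS
    split_ifs with h
    · simp [h]
    · have hlt := Finset.card_lt_card ((Finset.mem_powerset.mp hS).ssubset_of_ne h)
      rw [← mul_assoc, sub_mul_inv_choose hlt, sub_zero]
  simp only [mul_sub, Finset.sum_sub_distrib]
  rw [gain, sum_sum_powerset_erase A fun S => ((#A - 1).choose #S : ℝ)⁻¹ * w S,
    Finset.sum_congr rfl gain_term, Finset.sum_congr rfl loss_term, Finset.sum_sub_distrib,
    Finset.sum_sub_distrib, Finset.sum_ite_eq', Finset.sum_ite_eq',
    if_pos (Finset.empty_mem_powerset A), if_pos (Finset.mem_powerset_self A)]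
  ring

/-- Group efficiency: the sum of ADS values over group `D_t` equals the incremental
utility of that group relative to the union of all preceding groups. -/
theorem ads_group_efficiency [DecidableEq α]
    (T : ℕ) (hT : 1 ≤ T) (Dg : ℕ → Finset α)
    (hdisj : ∀ i < T, ∀ j < T, i ≠ j → Disjoint (Dg i) (Dg j))
    (hne : ∀ j < T, (Dg j).Nonempty)
    (D : Finset α) (hD : D = (Finset.range T).biUnion Dg)
    (v : Finset α → ℝ)
    (t : ℕ) (ht : t < T) :
    ∑ z ∈ Dg t, ADS Dg v t z = v (prefixUnion Dg (t + 1)) - v (prefixUnion Dg t) := by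
  have hcard : (#(Dg t) : ℝ) ≠ 0 := by
    exact_mod_cast (Finset.card_pos.mpr (hne t ht)).ne'
  have eff := shapley_efficiency (Dg t) fun S => v (prefixUnion Dg t ∪ S)
  have union_insert : ∀ (S : Finset α) (z : α),
      prefixUnion Dg t ∪ S ∪ {z} = prefixUnion Dg t ∪ insert z S := fun S z => by
    rw [Finset.union_assoc, Finset.union_comm S, Finset.insert_eq]
  have prefix_succ : prefixUnion Dg (t + 1) = prefixUnion Dg t ∪ Dg t := by
    rw [prefixUnion, Finset.range_add_one, Finset.biUnion_insert, Finset.union_comm, prefixUnion]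
  simp only [ADS, union_insert]
  rw [← Finset.mul_sum, eff, prefix_succ, Finset.union_empty, one_div, inv_mul_cancel_left₀ hcard]
end

section
/- (Intra-group difference identity) Fix t ∈ {1, …, T} with m = |D_t| ≥ 2, let q_i and q_j be distinct elements of D_t, write P = U_{t−1} and C̃ = D_t \ {q_i, q_j}. Then φ^σ(q_i; v, D) − φ^σ(q_j; v, D) = (1/(m−1)) · Σ_{S ⊆ C̃} (C(m−2, |S|))⁻¹ · (v(P ∪ S ∪ {q_i}) − v(P ∪ S ∪ {q_j})). -/
open Finset

variable {α : Type*}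

/-- Two adjacent inverse binomial coefficients add up to a multiple of one in the row above. -/
theorem inv_choose_add_inv_choose_succ {n s : ℕ} (h : s ≤ n) :
    ((n + 1).choose s : ℝ)⁻¹ + ((n + 1).choose (s + 1) : ℝ)⁻¹ =
      (n + 2) / (n + 1) * (n.choose s : ℝ)⁻¹ := by
  have hn : (n : ℝ) + 1 ≠ 0 := by positivity
  have hc : (n.choose s : ℝ) ≠ 0 := by exact_mod_cast (Nat.choose_pos h).ne'
  have hleft : ((n + 1).choose s : ℝ)⁻¹ = (n + 1 - s) / ((n + 1) * n.choose s) := by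
    have hpos : ((n + 1).choose s : ℝ) ≠ 0 := by
      exact_mod_cast (Nat.choose_pos (h.trans n.le_succ)).ne'
    have key : (n.choose s : ℝ) * (n + 1) = (n + 1).choose s * (n + 1 - s) := by
      have := congrArg (Nat.cast (R := ℝ)) (Nat.choose_mul_succ_eq n s)
      rw [Nat.cast_mul, Nat.cast_mul, Nat.cast_sub (h.trans n.le_succ)] at this
      exact_mod_cast this
    field_simp
    linarith
  have hright : ((n + 1).choose (s + 1) : ℝ)⁻¹ = (s + 1) / ((n + 1) * n.choose s) := by
    have hpos : ((n + 1).choose (s + 1) : ℝ) ≠ 0 := by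
      exact_mod_cast (Nat.choose_pos (Nat.succ_le_succ h)).ne'
    have key : ((n : ℝ) + 1) * n.choose s = (n + 1).choose (s + 1) * (s + 1) := by
      exact_mod_cast Nat.add_one_mul_choose_eq n s
    field_simp
    linarith
  rw [hleft, hright]
  field_simp
  ring

/-- The ADS value of `z`, with the sum split according to whether a coalition contains `w`. -/
theorem ADS_eq_sum_erase_erase [DecidableEq α] (Dg : ℕ → Finset α) (v : Finset α → ℝ) (t : ℕ)
    {z w : α} (hw : w ∈ Dg t) (hzw : z ≠ w) :
    ADS Dg v t z =
      (1 / (Dg t).card) *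
        ∑ S ∈ (((Dg t).erase z).erase w).powerset,
          ((((Dg t).card - 1).choose S.card : ℝ)⁻¹ *
              (v (prefixUnion Dg t ∪ S ∪ {z}) - v (prefixUnion Dg t ∪ S)) +
            (((Dg t).card - 1).choose (S.card + 1) : ℝ)⁻¹ *
              (v (prefixUnion Dg t ∪ S ∪ {w} ∪ {z}) - v (prefixUnion Dg t ∪ S ∪ {w}))) := by
  have hmem : w ∈ (Dg t).erase z := mem_erase.mpr ⟨hzw.symm, hw⟩
  have hnot : w ∉ ((Dg t).erase z).erase w := notMem_erase _ _
  rw [ADS]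
  conv_lhs => rw [← insert_erase hmem]
  rw [sum_powerset_insert hnot, ← sum_add_distrib]
  congr 1
  refine sum_congr rfl fun S hS => ?_
  have hS' : w ∉ S := fun h => hnot (mem_powerset.mp hS h)
  have hunion : prefixUnion Dg t ∪ insert w S = prefixUnion Dg t ∪ S ∪ {w} := by
    rw [insert_eq, union_comm {w} S, union_assoc]
  rw [card_insert_of_notMem hS', hunion]

/-- Intra-group difference identity: for distinct `q_i, q_j` in a group `D_t` with
`m = |D_t| ≥ 2`, the difference of their ADS values is a combinatorially weighted sum of
utility differences over subsets of `D_t \ {q_i, q_j}`, on top of the prefix `P = U_{t−1}`. -/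
theorem ads_intra_group_difference [DecidableEq α]
    (T : ℕ) (hT : 1 ≤ T) (Dg : ℕ → Finset α)
    (hdisj : ∀ i < T, ∀ j < T, i ≠ j → Disjoint (Dg i) (Dg j))
    (hne : ∀ j < T, (Dg j).Nonempty)
    (D : Finset α) (hD : D = (Finset.range T).biUnion Dg)
    (v : Finset α → ℝ)
    (t : ℕ) (ht : t < T)
    (m : ℕ) (hm : m = (Dg t).card) (hm2 : 2 ≤ m)
    (qi qj : α) (hqi : qi ∈ Dg t) (hqj : qj ∈ Dg t) (hij : qi ≠ qj) :
    ADS Dg v t qi - ADS Dg v t qj =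
      (1 / (m - 1 : ℝ)) *
        ∑ S ∈ ((Dg t).erase qi |>.erase qj).powerset,
          (((m - 2).choose S.card : ℝ))⁻¹ *
            (v (prefixUnion Dg t ∪ S ∪ {qi}) - v (prefixUnion Dg t ∪ S ∪ {qj})) := by
  obtain ⟨n, rfl⟩ : ∃ n, m = n + 2 := ⟨m - 2, by omega⟩
  have hcard : (((Dg t).erase qi).erase qj).card = n := by
    rw [card_erase_of_mem (mem_erase.mpr ⟨hij.symm, hqj⟩), card_erase_of_mem hqi]
    omega
  rw [ADS_eq_sum_erase_erase Dg v t hqj hij, ADS_eq_sum_erase_erase Dg v t hqi hij.symm,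
    erase_right_comm (a := qj), ← hm, ← mul_sub, ← sum_sub_distrib, mul_sum, mul_sum]
  refine sum_congr rfl fun S hS => ?_
  have hle : S.card ≤ n := hcard ▸ card_le_card (mem_powerset.mp hS)
  have hweight := inv_choose_add_inv_choose_succ hle
  rw [union_right_comm _ {qj} {qi}, show n + 2 - 1 = n + 1 by omega, Nat.add_sub_cancel]
  push_cast
  have hn : (n : ℝ) + 2 - 1 = n + 1 := by ring
  have hn1 : (n : ℝ) + 1 ≠ 0 := by positivity
  have hn2 : (n : ℝ) + 2 ≠ 0 := by positivity
  rw [hn]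
  generalize v (prefixUnion Dg t ∪ S ∪ {qi}) = a
  generalize v (prefixUnion Dg t ∪ S ∪ {qj}) = b
  trans 1 / ((n : ℝ) + 2) *
    ((((n + 1).choose S.card : ℝ)⁻¹ + ((n + 1).choose (S.card + 1) : ℝ)⁻¹) * (a - b))
  · ring
  · rw [hweight]
    field_simp
end

section
/- (Hypergeometric averaging identity) For natural numbers A, M and any natural number s with 0 ≤ s ≤ A, the following identity of real numbers holds: (1/(A+M+1)) · Σ_{r=0}^{M} C(A, s) · C(M, r) · (C(A+M, s+r))⁻¹ = 1/(A+1), where C(·,·) denotes the binomial coefficient. -/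
open Finset

/-- A function on `ℕ × ℕ` satisfying the Pascal-type recurrence
`f a b = f (a + 1) b + f a (b + 1)` is recovered from binomially weighted values at distance `n`. -/
lemma sum_antidiagonal_choose_mul_of_recurrence {R : Type*} [CommSemiring R] (f : ℕ → ℕ → R)
    (hf : ∀ a b, f a b = f (a + 1) b + f a (b + 1)) (n a b : ℕ) :
    ∑ ij ∈ antidiagonal n, (n.choose ij.1 : R) * f (a + ij.1) (b + ij.2) = f a b := by
  induction n with
  | zero => simp
  | succ n ih =>
    rw [sum_antidiagonal_choose_succ_mul (fun i j => f (a + i) (b + j)), ← sum_add_distrib, ← ih]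
    refine sum_congr rfl fun ij hij => ?_
    have hsymm : n.choose ij.2 = n.choose ij.1 :=
      (Nat.choose_symm_of_eq_add (mem_antidiagonal.mp hij).symm).symm
    rw [hsymm, hf (a + ij.1) (b + ij.2), add_comm (f _ _), mul_add, add_assoc, add_assoc]

/-- The value `a! b! / (a + b + 1)!` of the Beta integral `∫₀¹ xᵃ (1 - x)ᵇ dx`. -/
noncomputable def betaValue (a b : ℕ) : ℝ :=
  (a.factorial * b.factorial : ℝ) / (a + b + 1).factorial

lemma betaValue_recurrence (a b : ℕ) :
    betaValue a b = betaValue (a + 1) b + betaValue a (b + 1) := by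
  have hfac : ((a + b + 1).factorial : ℝ) ≠ 0 := by positivity
  have hpos : (a + b + 1 + 1 : ℝ) ≠ 0 := by positivity
  simp only [betaValue, show a + 1 + b + 1 = a + b + 1 + 1 by ring,
    show a + (b + 1) + 1 = a + b + 1 + 1 by ring, Nat.factorial_succ (a + b + 1),
    Nat.factorial_succ a, Nat.factorial_succ b]
  push_cast
  field_simp
  ring

lemma inv_choose_eq_mul_betaValue (a b : ℕ) :
    ((a + b).choose a : ℝ)⁻¹ = (a + b + 1) * betaValue a b := by
  have hfac : ((a + b).factorial : ℝ) ≠ 0 := by positivity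
  have hpos : (a + b + 1 : ℝ) ≠ 0 := by positivity
  rw [Nat.cast_add_choose, betaValue, Nat.factorial_succ]
  push_cast
  field_simp

/-- Hypergeometric averaging identity:
`(1/(A+M+1)) · Σ_{r=0}^{M} C(A,s)·C(M,r)/C(A+M,s+r) = 1/(A+1)` for `s ≤ A`. -/
theorem hypergeometric_averaging_identity (A M s : ℕ) (hs : s ≤ A) :
    (1 / (A + M + 1 : ℝ)) *
        ∑ r ∈ Finset.range (M + 1),
          (A.choose s : ℝ) * (M.choose r : ℝ) * (((A + M).choose (s + r) : ℝ))⁻¹ =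
      1 / (A + 1 : ℝ) := by
  obtain ⟨b, rfl⟩ := Nat.exists_eq_add_of_le hs
  have hsum : ∑ r ∈ Finset.range (M + 1), ((s + b).choose s : ℝ) * (M.choose r : ℝ) *
      (((s + b + M).choose (s + r) : ℝ))⁻¹ =
      ((s + b).choose s : ℝ) * ((s + b + M + 1) * betaValue s b) := by
    rw [← sum_antidiagonal_choose_mul_of_recurrence betaValue betaValue_recurrence M s b,
      Nat.sum_antidiagonal_eq_sum_range_succ_mk, mul_sum, mul_sum]
    refine sum_congr rfl fun r hr => ?_
    obtain ⟨k, rfl⟩ := Nat.exists_eq_add_of_le (Nat.lt_succ_iff.mp (mem_range.mp hr))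
    rw [show s + b + (r + k) = s + r + (b + k) by ring, inv_choose_eq_mul_betaValue,
      Nat.add_sub_cancel_left]
    push_cast
    ring
  have hchoose : ((s + b).choose s : ℝ) ≠ 0 :=
    Nat.cast_ne_zero.mpr (Nat.choose_pos hs).ne'
  have hinv := inv_choose_eq_mul_betaValue s b
  have hA : (s + b + 1 : ℝ) ≠ 0 := by positivity
  have hAM : (s + b + M + 1 : ℝ) ≠ 0 := by positivity
  rw [hsum]
  push_cast
  field_simp at hinv ⊢
  linarith
end

section
/- (No-entry lemma for the KNN utility) Let A be a finite set of labeled points and q a labeled point not in A, with d injective on A ∪ {q}. If at least K points of A are strictly closer to the query than q, i.e., |{p ∈ A : d(p) < d(q)}| ≥ K, then v_knn(A ∪ {q}) = v_knn(A). -/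
open Finset

variable {β L : Type*}

/-- The elements of `A` listed in increasing order of distance `d` to the query. -/
noncomputable def sortByDist (d : β → ℝ) (A : Finset β) : List β :=
  A.toList.mergeSort (fun p q => decide (d p ≤ d q))

/-- `N_i(A)`: the point of `A` with the `i`-th smallest distance to the query (1-indexed). -/
noncomputable def nthNearest [Inhabited β] (d : β → ℝ) (A : Finset β) (i : ℕ) : β :=
  (sortByDist d A).getD (i - 1) default

/-- The KNN utility of a finite set `A` of labeled points at a query with label `ytest`:
`v_knn(A) = (1/K) · Σ_{i=1}^{min(K,|A|)} 1[y(N_i(A)) = y_test]`. -/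
noncomputable def vknn [Inhabited β] [DecidableEq L] (K : ℕ) (ytest : L) (y : β → L)
    (d : β → ℝ) (A : Finset β) : ℝ :=
  (1 / K) * ∑ i ∈ Finset.Icc 1 (min K A.card),
    if y (nthNearest d A i) = ytest then (1 : ℝ) else 0

/-- The ADS value of a point `q` in the current group `C`, given the prefix instances `P`,
for the KNN utility. -/
noncomputable def adsKnn [Inhabited β] [DecidableEq β] [DecidableEq L] (K : ℕ) (ytest : L)
    (y : β → L) (d : β → ℝ) (P C : Finset β) (q : β) : ℝ :=
  (1 / C.card) *
    ∑ S ∈ (C.erase q).powerset,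
      (((C.card - 1).choose S.card : ℝ))⁻¹ *
        (vknn K ytest y d (P ∪ S ∪ {q}) - vknn K ytest y d (P ∪ S))

theorem sortByDist_perm (d : β → ℝ) (A : Finset β) : (sortByDist d A).Perm A.toList :=
  List.mergeSort_perm _ _

theorem mem_sortByDist {d : β → ℝ} {A : Finset β} {p : β} : p ∈ sortByDist d A ↔ p ∈ A :=
  (sortByDist_perm d A).mem_iff.trans Finset.mem_toList

theorem nodup_sortByDist (d : β → ℝ) (A : Finset β) : (sortByDist d A).Nodup :=
  (sortByDist_perm d A).nodup_iff.mpr A.nodup_toList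

theorem length_sortByDist (d : β → ℝ) (A : Finset β) : (sortByDist d A).length = A.card :=
  (sortByDist_perm d A).length_eq.trans A.length_toList

theorem pairwise_sortByDist (d : β → ℝ) (A : Finset β) :
    (sortByDist d A).Pairwise (fun p q => d p ≤ d q) := by
  simpa [sortByDist] using List.pairwise_mergeSort (le := fun p q => decide (d p ≤ d q))
    (fun _ _ _ => by simpa using le_trans) (fun _ _ => by simpa using le_total _ _) A.toList

/-- If every point of `B` is strictly closer than every point of `C`, the sorted list of `B ∪ C`
is that of `B` followed by that of `C`. -/
theorem sortByDist_union [DecidableEq β] {d : β → ℝ} {B C : Finset β}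
    (hinj : Set.InjOn d ↑(B ∪ C)) (hlt : ∀ b ∈ B, ∀ c ∈ C, d b < d c) :
    sortByDist d (B ∪ C) = sortByDist d B ++ sortByDist d C := by
  refine List.Perm.eq_of_pairwise (le := fun p q => d p ≤ d q) ?_ (pairwise_sortByDist _ _) ?_ ?_
  · intro a b ha hb hab hba
    refine hinj (mem_sortByDist.mp ha) ?_ (le_antisymm hab hba)
    simpa [mem_sortByDist] using hb
  · refine List.pairwise_append.mpr ⟨pairwise_sortByDist _ _, pairwise_sortByDist _ _, ?_⟩
    exact fun b hb c hc => (hlt b (mem_sortByDist.mp hb) c (mem_sortByDist.mp hc)).le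
  · refine (List.perm_ext_iff_of_nodup (nodup_sortByDist _ _) ?_).mpr fun p => ?_
    · refine List.nodup_append.mpr ⟨nodup_sortByDist _ _, nodup_sortByDist _ _, ?_⟩
      exact fun b hb c hc h =>
        (hlt b (mem_sortByDist.mp hb) c (mem_sortByDist.mp hc)).ne (congrArg d h)
    · simp [mem_sortByDist]

/-- The KNN utility only depends on an initial segment of at least `K` nearest points. -/
theorem vknn_union_eq_left [Inhabited β] [DecidableEq β] [DecidableEq L] {K : ℕ} (ytest : L)
    (y : β → L) {d : β → ℝ} {B C : Finset β} (hinj : Set.InjOn d ↑(B ∪ C))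
    (hlt : ∀ b ∈ B, ∀ c ∈ C, d b < d c) (hK : K ≤ B.card) :
    vknn K ytest y d (B ∪ C) = vknn K ytest y d B := by
  have hcard : B.card ≤ (B ∪ C).card := Finset.card_le_card Finset.subset_union_left
  unfold vknn
  rw [min_eq_left hK, min_eq_left (hK.trans hcard)]
  congr 1
  refine Finset.sum_congr rfl fun i hi => ?_
  have hi' := Finset.mem_Icc.mp hi
  have hlen : i - 1 < (sortByDist d B).length := by
    rw [length_sortByDist]
    omega
  rw [nthNearest, nthNearest, sortByDist_union hinj hlt, List.getD_append _ _ _ _ hlen]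

/-- No-entry lemma for the KNN utility: if at least `K` points of `A` are strictly closer
to the query than `q ∉ A`, then adding `q` does not change the KNN utility. -/
theorem vknn_no_entry [Inhabited β] [DecidableEq β] [DecidableEq L]
    (K : ℕ) (hK : 1 ≤ K) (ytest : L) (y : β → L) (d : β → ℝ)
    (A : Finset β) (q : β) (hq : q ∉ A)
    (hinj : Set.InjOn d ↑(insert q A))
    (hclose : K ≤ (A.filter (fun p => d p < d q)).card) :
    vknn K ytest y d (insert q A) = vknn K ytest y d A := by
  set B := A.filter (fun p => d p < d q)
  set C := A.filter (fun p => ¬ d p < d q)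
  have hA : A = B ∪ C := (Finset.filter_union_filter_not_eq _ A).symm
  have hqA : insert q A = B ∪ insert q C := by rw [Finset.union_insert, ← hA]
  have hlt : ∀ b ∈ B, ∀ c ∈ insert q C, d b < d c := by
    intro b hb c hc
    have hbq : d b < d q := (Finset.mem_filter.mp hb).2
    rcases Finset.mem_insert.mp hc with rfl | hc
    · exact hbq
    · exact hbq.trans_le (not_lt.mp (Finset.mem_filter.mp hc).2)
  have hinjA : Set.InjOn d ↑(B ∪ C) := by
    rw [← hA]
    exact hinj.mono (Finset.coe_subset.mpr (Finset.subset_insert q A))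
  calc vknn K ytest y d (insert q A)
      = vknn K ytest y d (B ∪ insert q C) := by rw [hqA]
    _ = vknn K ytest y d B := vknn_union_eq_left ytest y (hqA ▸ hinj) hlt hclose
    _ = vknn K ytest y d (B ∪ C) := (vknn_union_eq_left ytest y hinjA
        (fun b hb c hc => hlt b hb c (Finset.mem_insert_of_mem hc)) hclose).symm
    _ = vknn K ytest y d A := by rw [← hA]
end

section
/- (KNN-ADS, Case 1) For every i with 1 ≤ i ≤ m − 1, if K ≤ c_i, then φ(q_i) − φ(q_{i+1}) = 0. -/
open Finset

variable {β L : Type*}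

/-- Cutting at a distance threshold splits the sorted enumeration into the near and far parts. -/
theorem sortByDist_eq_append {d : β → ℝ} {A : Finset β}
    (hinj : Set.InjOn d A) (t : ℝ) :
    sortByDist d A =
      sortByDist d (A.filter (fun p => d p < t)) ++
        sortByDist d (A.filter (fun p => ¬ d p < t)) := by
  refine List.Perm.eq_of_pairwise (le := fun p q => d p ≤ d q) ?_ (pairwise_sortByDist d A) ?_ ?_
  · intro a b ha hb hab hba
    refine hinj (mem_sortByDist.mp ha) ?_ (le_antisymm hab hba)
    rcases List.mem_append.mp hb with h | h <;>
      exact (Finset.mem_filter.mp (mem_sortByDist.mp h)).1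
  · refine List.pairwise_append.mpr ⟨pairwise_sortByDist d _, pairwise_sortByDist d _, ?_⟩
    intro a ha b hb
    have ha' := (Finset.mem_filter.mp (mem_sortByDist.mp ha)).2
    have hb' := (Finset.mem_filter.mp (mem_sortByDist.mp hb)).2
    exact ha'.le.trans (not_lt.mp hb')
  · refine (List.perm_ext_iff_of_nodup ?_ ?_).mpr ?_
    · exact (sortByDist_perm d A).nodup_iff.mpr A.nodup_toList
    · refine List.nodup_append'.mpr ⟨?_, ?_, ?_⟩
      · exact (sortByDist_perm d _).nodup_iff.mpr (Finset.nodup_toList _)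
      · exact (sortByDist_perm d _).nodup_iff.mpr (Finset.nodup_toList _)
      · intro a ha hb
        exact (Finset.mem_filter.mp (mem_sortByDist.mp hb)).2
          (Finset.mem_filter.mp (mem_sortByDist.mp ha)).2
    · intro a
      simp only [List.mem_append, mem_sortByDist, Finset.mem_filter]
      tauto

/-- The KNN utility only sees the points closer than `t` when at least `K` of them exist. -/
theorem vknn_eq_vknn_filter [Inhabited β] [DecidableEq L] {K : ℕ} (ytest : L)
    (y : β → L) {d : β → ℝ} {A : Finset β} (hinj : Set.InjOn d A) {t : ℝ}
    (hK : K ≤ (A.filter (fun p => d p < t)).card) :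
    vknn K ytest y d A = vknn K ytest y d (A.filter (fun p => d p < t)) := by
  have hA : K ≤ A.card := hK.trans (Finset.card_filter_le _ _)
  unfold vknn
  rw [min_eq_left hA, min_eq_left hK]
  congr 1
  refine Finset.sum_congr rfl fun i hi => ?_
  obtain ⟨hi1, hiK⟩ := Finset.mem_Icc.mp hi
  have : nthNearest d A i = nthNearest d (A.filter (fun p => d p < t)) i := by
    unfold nthNearest
    rw [sortByDist_eq_append hinj t, List.getD_append]
    rw [length_sortByDist]
    omega
  rw [this]

/-- Adding a point with at least `K` closer points does not change the KNN utility. -/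
theorem vknn_union_singleton [Inhabited β] [DecidableEq β] [DecidableEq L] {K : ℕ} (ytest : L)
    (y : β → L) {d : β → ℝ} {A : Finset β} {q : β} (hinj : Set.InjOn d ↑(A ∪ {q}))
    (hK : K ≤ (A.filter (fun p => d p < d q)).card) :
    vknn K ytest y d (A ∪ {q}) = vknn K ytest y d A := by
  have hfilter : (A ∪ {q}).filter (fun p => d p < d q) = A.filter (fun p => d p < d q) := by
    simp [Finset.filter_insert]
  rw [vknn_eq_vknn_filter ytest y hinj (t := d q) (by rwa [hfilter]), hfilter,
    vknn_eq_vknn_filter ytest y (hinj.mono (by simp)) hK]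

/-- A point preceded by at least `K` prefix points has zero ADS value. -/
theorem adsKnn_eq_zero [Inhabited β] [DecidableEq β] [DecidableEq L] {K : ℕ} (ytest : L)
    (y : β → L) {d : β → ℝ} {P C : Finset β} (hinj : Set.InjOn d ↑(P ∪ C)) {q : β} (hq : q ∈ C)
    (hK : K ≤ (P.filter (fun p => d p < d q)).card) :
    adsKnn K ytest y d P C q = 0 := by
  unfold adsKnn
  refine mul_eq_zero_of_right _ (Finset.sum_eq_zero fun S hS => ?_)
  have hSC : S ⊆ C := (Finset.mem_powerset.mp hS).trans (Finset.erase_subset _ _)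
  rw [vknn_union_singleton, sub_self, mul_zero]
  · refine hinj.mono (Finset.coe_subset.mpr ?_)
    exact Finset.union_subset (Finset.union_subset_union_right hSC)
      (Finset.singleton_subset_iff.mpr (Finset.mem_union_right _ hq))
  · exact hK.trans
      (Finset.card_le_card (Finset.filter_subset_filter _ Finset.subset_union_left))

theorem nthNearest_mem [Inhabited β] (d : β → ℝ) {A : Finset β} {i : ℕ} (hi1 : 1 ≤ i)
    (hi : i ≤ A.card) : nthNearest d A i ∈ A := by
  have hlt : i - 1 < (sortByDist d A).length := by rw [length_sortByDist]; omega
  unfold nthNearest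
  rw [List.getD_eq_getElem _ _ hlt]
  exact mem_sortByDist.mp (List.getElem_mem hlt)

theorem dist_nthNearest_le_succ [Inhabited β] (d : β → ℝ) {A : Finset β} {i : ℕ} (hi1 : 1 ≤ i)
    (hi : i + 1 ≤ A.card) : d (nthNearest d A i) ≤ d (nthNearest d A (i + 1)) := by
  have hlt : i - 1 < (sortByDist d A).length := by rw [length_sortByDist]; omega
  have hlt' : i + 1 - 1 < (sortByDist d A).length := by rw [length_sortByDist]; omega
  unfold nthNearest
  rw [List.getD_eq_getElem _ _ hlt, List.getD_eq_getElem _ _ hlt']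
  exact List.pairwise_iff_getElem.mp (pairwise_sortByDist d A) _ _ hlt hlt' (by omega)

/-- KNN-ADS, Case 1: if `K ≤ c_i` (at least `K` prefix points are closer to the query than
the `i`-th nearest point of `C`), then consecutive ADS values coincide:
`φ(q_i) − φ(q_{i+1}) = 0`. -/
theorem knn_ads_case1 [Inhabited β] [DecidableEq β] [DecidableEq L]
    (K : ℕ) (hK : 1 ≤ K) (ytest : L) (y : β → L) (d : β → ℝ)
    (P C : Finset β) (hPC : Disjoint P C)
    (hinj : Set.InjOn d ↑(P ∪ C))
    (m : ℕ) (hm : m = C.card)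
    (i : ℕ) (hi1 : 1 ≤ i) (hi : i ≤ m - 1)
    (hKc : K ≤ (P.filter (fun p => d p < d (nthNearest d C i))).card) :
    adsKnn K ytest y d P C (nthNearest d C i) -
      adsKnn K ytest y d P C (nthNearest d C (i + 1)) = 0 := by
  have hsucc : i + 1 ≤ C.card := by omega
  have hKc' : K ≤ (P.filter (fun p => d p < d (nthNearest d C (i + 1)))).card :=
    hKc.trans (Finset.card_le_card (Finset.monotone_filter_right P fun _ _ hp =>
      hp.trans_le (dist_nthNearest_le_succ d hi1 hsucc)))
  rw [adsKnn_eq_zero ytest y hinj (nthNearest_mem d hi1 (by omega)) hKc,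
    adsKnn_eq_zero ytest y hinj (nthNearest_mem d (by omega) hsucc) hKc', sub_self]
end

section
/- (KNN-ADS, Case 2) For every i with 1 ≤ i ≤ m − 1, if c_i = c_{i+1} = c and c < K, then φ(q_i) − φ(q_{i+1}) = ((1[y(q_i) = y_test] − 1[y(q_{i+1}) = y_test]) / K) · (min(K − c, i) / i). -/
open Finset

variable {β L : Type*}

/-- The number of points of `A` strictly closer to the query than `p`. -/
noncomputable def distRank (d : β → ℝ) (A : Finset β) (p : β) : ℕ :=
  (A.filter (fun q => d q < d p)).card

theorem getElem_sortByDist_lt_iff {d : β → ℝ} {A : Finset β} (hA : Set.InjOn d A)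
    {j k : ℕ} (hj : j < (sortByDist d A).length) (hk : k < (sortByDist d A).length) :
    d (sortByDist d A)[j] < d (sortByDist d A)[k] ↔ j < k := by
  have hle := List.pairwise_iff_getElem.mp (pairwise_sortByDist d A)
  constructor
  · intro h
    by_contra! hkj
    rcases hkj.eq_or_lt with rfl | hlt
    · exact lt_irrefl _ h
    · exact absurd h (hle k j hk hj hlt).not_gt
  · intro h
    refine (hle j k hj hk h).lt_of_ne fun he => h.ne ?_
    exact (nodup_sortByDist d A).getElem_inj_iff.mp
      (hA (mem_sortByDist.mp (List.getElem_mem hj)) (mem_sortByDist.mp (List.getElem_mem hk)) he)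

theorem nthNearest_succ [Inhabited β] (d : β → ℝ) {A : Finset β} {j : ℕ} (hj : j < A.card) :
    nthNearest d A (j + 1) =
      (sortByDist d A)[j]'(by rwa [length_sortByDist]) := by
  simp [nthNearest, length_sortByDist, hj]

theorem nthNearest_succ_mem [Inhabited β] (d : β → ℝ) {A : Finset β} {j : ℕ} (hj : j < A.card) :
    nthNearest d A (j + 1) ∈ A := by
  rw [nthNearest_succ d hj]
  exact mem_sortByDist.mp (List.getElem_mem _)

theorem distRank_nthNearest_succ [Inhabited β] {d : β → ℝ} {A : Finset β} (hA : Set.InjOn d A)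
    {j : ℕ} (hj : j < A.card) : distRank d A (nthNearest d A (j + 1)) = j := by
  have hlen := length_sortByDist d A
  rw [nthNearest_succ d hj, distRank]
  refine (Finset.card_range j).symm.trans (Finset.card_bij (fun k hk => (sortByDist d A)[k]'(by
    have := Finset.mem_range.mp hk
    omega)) ?_ ?_ ?_) |>.symm
  · intro k hk
    simp only [Finset.mem_filter]
    exact ⟨mem_sortByDist.mp (List.getElem_mem _),
      (getElem_sortByDist_lt_iff hA _ _).mpr (Finset.mem_range.mp hk)⟩
  · intro k _ l _ h
    exact (nodup_sortByDist d A).getElem_inj_iff.mp h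
  · intro p hp
    simp only [Finset.mem_filter] at hp
    obtain ⟨k, hk, rfl⟩ := List.mem_iff_getElem.mp (mem_sortByDist (d := d).mpr hp.1)
    exact ⟨k, Finset.mem_range.mpr ((getElem_sortByDist_lt_iff hA _ _).mp hp.2), rfl⟩

theorem distRank_lt_distRank {d : β → ℝ} {A : Finset β} {p q : β} (hp : p ∈ A)
    (h : d p < d q) : distRank d A p < distRank d A q := by
  refine Finset.card_lt_card (Finset.ssubset_iff_of_subset ?_ |>.mpr ⟨p, ?_, ?_⟩)
  · intro r hr
    simp only [Finset.mem_filter] at hr ⊢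
    exact ⟨hr.1, hr.2.trans h⟩
  · simp [hp, h]
  · simp

theorem distRank_injOn {d : β → ℝ} {A : Finset β} (hA : Set.InjOn d A) :
    Set.InjOn (distRank d A) A := by
  intro p hp q hq h
  refine hA hp hq ?_
  rcases lt_trichotomy (d p) (d q) with hlt | heq | hlt
  · exact absurd h (distRank_lt_distRank hp hlt).ne
  · exact heq
  · exact absurd h (distRank_lt_distRank hq hlt).ne'

theorem distRank_lt_card {d : β → ℝ} {A : Finset β} {p : β} (hp : p ∈ A) :
    distRank d A p < A.card :=
  Finset.card_lt_card (Finset.filter_ssubset.mpr ⟨p, hp, lt_irrefl _⟩)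

/-- The KNN utility as a sum over the points of `A` having fewer than `K` closer points. -/
theorem vknn_eq_sum_distRank [Inhabited β] [DecidableEq L] (K : ℕ) (ytest : L) (y : β → L)
    {d : β → ℝ} {A : Finset β} (hA : Set.InjOn d A) :
    vknn K ytest y d A = (1 / K) * ∑ p ∈ A,
      if distRank d A p < K then (if y p = ytest then (1 : ℝ) else 0) else 0 := by
  rw [vknn, ← Finset.sum_filter (fun p => distRank d A p < K)]
  congr 1
  have key : ∀ k ∈ Finset.Icc 1 (min K A.card),
      nthNearest d A k ∈ A ∧ distRank d A (nthNearest d A k) + 1 = k ∧ k ≤ K := by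
    intro k hk
    obtain ⟨h1, h2⟩ := Finset.mem_Icc.mp hk
    obtain ⟨j, rfl⟩ : ∃ j, k = j + 1 := ⟨k - 1, by omega⟩
    have hj : j < A.card := by omega
    exact ⟨nthNearest_succ_mem d hj, by rw [distRank_nthNearest_succ hA hj], by omega⟩
  refine Finset.sum_nbij' (nthNearest d A) (fun p => distRank d A p + 1) ?_ ?_ ?_ ?_ ?_
  · intro k hk
    obtain ⟨h1, h2, h3⟩ := key k hk
    exact Finset.mem_filter.mpr ⟨h1, by omega⟩
  · intro p hp
    obtain ⟨h1, h2⟩ := Finset.mem_filter.mp hp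
    have := distRank_lt_card (d := d) h1
    exact Finset.mem_Icc.mpr ⟨by omega, by omega⟩
  · intro k hk
    exact (key k hk).2.1
  · intro p hp
    have hpA := (Finset.mem_filter.mp hp).1
    have hlt := distRank_lt_card (d := d) hpA
    exact distRank_injOn hA (nthNearest_succ_mem d hlt) hpA (distRank_nthNearest_succ hA hlt)
  · intro k _
    rfl

theorem distRank_insert [DecidableEq β] {d : β → ℝ} {B : Finset β} {a : β} (ha : a ∉ B) (p : β) :
    distRank d (insert a B) p = distRank d B p + if d a < d p then 1 else 0 := by
  unfold distRank
  rw [Finset.filter_insert]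
  split_ifs with h
  · rw [Finset.card_insert_of_notMem (by simp [ha])]
  · rfl

/-- Swapping `a` for `b` changes the KNN utility only through the labels of `a` and `b` when no
point of `B` separates them. -/
theorem vknn_insert_sub_vknn_insert [Inhabited β] [DecidableEq β] [DecidableEq L] (K : ℕ)
    (ytest : L) (y : β → L) {d : β → ℝ} {B : Finset β} {a b : β} (ha : a ∉ B) (hb : b ∉ B)
    (hinja : Set.InjOn d ↑(insert a B)) (hinjb : Set.InjOn d ↑(insert b B))
    (hsep : ∀ q ∈ B, d q < d a ↔ d q < d b) :
    vknn K ytest y d (insert a B) - vknn K ytest y d (insert b B) =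
      (((if y a = ytest then (1 : ℝ) else 0) - (if y b = ytest then (1 : ℝ) else 0)) / K) *
        if distRank d B a < K then 1 else 0 := by
  have hne : ∀ x : β, x ∉ B → Set.InjOn d ↑(insert x B) → ∀ q ∈ B, (d x < d q ↔ ¬ d q < d x) := by
    intro x hx hinj q hq
    have : d x ≠ d q := fun h => hx (by
      rwa [hinj (by simp) (by simp [hq]) h])
    exact ⟨fun h => h.not_gt, fun h => lt_of_le_of_ne (not_lt.mp h) this⟩
  have hsum : ∑ p ∈ B, (if distRank d (insert a B) p < K then
        (if y p = ytest then (1 : ℝ) else 0) else 0) =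
      ∑ p ∈ B, if distRank d (insert b B) p < K then
        (if y p = ytest then (1 : ℝ) else 0) else 0 := by
    refine Finset.sum_congr rfl fun q hq => ?_
    simp only [distRank_insert ha, distRank_insert hb, hne a ha hinja q hq, hne b hb hinjb q hq,
      hsep q hq]
  have hrank : distRank d B b = distRank d B a := by
    unfold distRank
    rw [Finset.filter_congr hsep]
  rw [vknn_eq_sum_distRank K ytest y hinja, vknn_eq_sum_distRank K ytest y hinjb,
    Finset.sum_insert ha, Finset.sum_insert hb, hsum, distRank_insert ha, distRank_insert hb,
    hrank]
  simp only [lt_irrefl, if_false, add_zero]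
  split_ifs <;> ring

/-- The weight of a coalition of size `t` in the Shapley value of a game with `n + 1` players. -/
noncomputable def shapleyWeight (n t : ℕ) : ℝ := ((n + 1 : ℝ) * (n.choose t : ℝ))⁻¹

theorem shapleyWeight_succ_add {n t : ℕ} (h : t ≤ n) :
    shapleyWeight (n + 1) t + shapleyWeight (n + 1) (t + 1) = shapleyWeight n t := by
  obtain ⟨s, rfl⟩ := Nat.exists_eq_add_of_le h
  unfold shapleyWeight
  have e1 : (((t + s + 1).choose t : ℕ) : ℝ) * (s + 1) = (t + s + 1) * ((t + s).choose t : ℕ) := by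
    have := Nat.choose_mul_succ_eq (t + s) t
    rw [show t + s + 1 - t = s + 1 by omega] at this
    have h2 : (((t + s).choose t * (t + s + 1) : ℕ) : ℝ) = ((t + s + 1).choose t * (s + 1) : ℕ) := by
      rw [this]
    push_cast at h2
    linarith
  have e2 : (((t + s + 1).choose (t + 1) : ℕ) : ℝ) * (t + 1) =
      (t + s + 1) * ((t + s).choose t : ℕ) := by
    have := Nat.add_one_mul_choose_eq (t + s) t
    have h2 : (((t + s + 1) * (t + s).choose t : ℕ) : ℝ) =
        ((t + s + 1).choose (t + 1) * (t + 1) : ℕ) := by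
      rw [this]
    push_cast at h2
    linarith
  have p0 : (0 : ℝ) < ((t + s).choose t : ℕ) := by exact_mod_cast Nat.choose_pos (by omega)
  have q1 : (((t + s + 1).choose t : ℕ) : ℝ) = (t + s + 1) * ((t + s).choose t : ℕ) / (s + 1) := by
    rw [eq_div_iff (by positivity), e1]
  have q2 : (((t + s + 1).choose (t + 1) : ℕ) : ℝ) =
      (t + s + 1) * ((t + s).choose t : ℕ) / (t + 1) := by
    rw [eq_div_iff (by positivity), e2]
  rw [q1, q2]
  push_cast
  field_simp
  ring

theorem sum_powerset_insert_add [DecidableEq β] {D : Finset β} {x : β} (hx : x ∉ D)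
    (F : Finset β → ℝ) :
    ∑ T ∈ (insert x D).powerset, F T = ∑ T ∈ D.powerset, (F T + F (insert x T)) := by
  rw [Finset.sum_powerset_insert hx, Finset.sum_add_distrib]

/-- Players outside `A` can be dropped from a Shapley average of a function of `T ∩ A`. -/
theorem sum_shapleyWeight_union [DecidableEq β] (A E : Finset β) (hAE : Disjoint A E)
    (f : Finset β → ℝ) :
    ∑ T ∈ (A ∪ E).powerset, shapleyWeight (A ∪ E).card T.card * f (T ∩ A) =
      ∑ T ∈ A.powerset, shapleyWeight A.card T.card * f T := by
  induction E using Finset.induction_on with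
  | empty =>
    rw [Finset.union_empty]
    refine Finset.sum_congr rfl fun T hT => ?_
    rw [Finset.inter_eq_left.mpr (Finset.mem_powerset.mp hT)]
  | insert x E hx ih =>
    rw [Finset.disjoint_insert_right] at hAE
    have hxD : x ∉ A ∪ E := by simp [hx, hAE.1]
    rw [Finset.union_insert, sum_powerset_insert_add hxD, ← ih hAE.2,
      Finset.card_insert_of_notMem hxD]
    refine Finset.sum_congr rfl fun T hT => ?_
    have hT := Finset.mem_powerset.mp hT
    rw [Finset.insert_inter_of_notMem hAE.1,
      Finset.card_insert_of_notMem (fun h => hxD (hT h)), ← add_mul,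
      shapleyWeight_succ_add (Finset.card_le_card hT)]

theorem sum_powerset_shapleyWeight (A : Finset β) (f : ℕ → ℝ) :
    ∑ T ∈ A.powerset, shapleyWeight A.card T.card * f T.card =
      (∑ j ∈ Finset.range (A.card + 1), f j) / (A.card + 1) := by
  rw [Finset.sum_powerset_apply_card (fun t => shapleyWeight A.card t * f t), Finset.sum_div]
  refine Finset.sum_congr rfl fun j hj => ?_
  have hpos : (0 : ℝ) < (A.card.choose j : ℕ) := by
    exact_mod_cast Nat.choose_pos (by simpa [Nat.lt_succ_iff] using hj)
  rw [nsmul_eq_mul, shapleyWeight]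
  field_simp

theorem adsKnn_eq_sum_shapleyWeight [Inhabited β] [DecidableEq β] [DecidableEq L] (K : ℕ)
    (ytest : L) (y : β → L) (d : β → ℝ) (P C : Finset β) {q : β} (hq : q ∈ C) :
    adsKnn K ytest y d P C q = ∑ S ∈ (C.erase q).powerset,
      shapleyWeight (C.card - 1) S.card *
        (vknn K ytest y d (insert q (P ∪ S)) - vknn K ytest y d (P ∪ S)) := by
  have hc : ((C.card - 1 : ℕ) : ℝ) + 1 = C.card := by
    exact_mod_cast Nat.sub_add_cancel (Finset.card_pos.mpr ⟨q, hq⟩)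
  rw [adsKnn, Finset.mul_sum]
  refine Finset.sum_congr rfl fun S _ => ?_
  rw [shapleyWeight, hc, mul_inv, Finset.union_singleton, one_div, mul_assoc]

/-- The difference of two ADS values as a Shapley average of the effect of swapping the points. -/
theorem adsKnn_sub_adsKnn [Inhabited β] [DecidableEq β] [DecidableEq L] (K : ℕ)
    (ytest : L) (y : β → L) (d : β → ℝ) (P D : Finset β) {a b : β} (hab : a ≠ b) (ha : a ∉ D)
    (hb : b ∉ D) :
    adsKnn K ytest y d P (insert a (insert b D)) a -
        adsKnn K ytest y d P (insert a (insert b D)) b =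
      ∑ T ∈ D.powerset, shapleyWeight D.card T.card *
        (vknn K ytest y d (insert a (P ∪ T)) - vknn K ytest y d (insert b (P ∪ T))) := by
  have ea : (insert a (insert b D)).erase a = insert b D :=
    Finset.erase_insert (by simp [hab, ha])
  have eb : (insert a (insert b D)).erase b = insert a D := by
    rw [Finset.insert_comm, Finset.erase_insert (by simp [hab.symm, hb])]
  have hcard : (insert a (insert b D)).card - 1 = D.card + 1 := by
    rw [Finset.card_insert_of_notMem (by simp [hab, ha]), Finset.card_insert_of_notMem hb]
    rfl
  rw [adsKnn_eq_sum_shapleyWeight K ytest y d P _ (by simp),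
    adsKnn_eq_sum_shapleyWeight K ytest y d P _ (by simp), ea, eb, hcard,
    sum_powerset_insert_add hb, sum_powerset_insert_add ha, ← Finset.sum_sub_distrib]
  refine Finset.sum_congr rfl fun T hT => ?_
  have hT := Finset.mem_powerset.mp hT
  rw [Finset.card_insert_of_notMem (fun h => ha (hT h)),
    Finset.card_insert_of_notMem (fun h => hb (hT h)), Finset.union_insert, Finset.union_insert,
    Finset.insert_comm b a, ← shapleyWeight_succ_add (Finset.card_le_card hT)]
  ring

/-- Among the points of `A`, exactly `p` and those closer than `p` are closer than its
successor `q`. -/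
theorem lt_iff_of_distRank_succ [DecidableEq β] {d : β → ℝ} {A : Finset β} {p q : β}
    (hp : p ∈ A) (h : distRank d A q = distRank d A p + 1) :
    d p < d q ∧ ∀ r ∈ A, r ≠ p → (d r < d p ↔ d r < d q) := by
  have hlt : d p < d q := by
    by_contra! hle
    have : distRank d A q ≤ distRank d A p := by
      refine Finset.card_le_card fun r hr => ?_
      simp only [Finset.mem_filter] at hr ⊢
      exact ⟨hr.1, hr.2.trans_le hle⟩
    omega
  refine ⟨hlt, fun r hr hrp => ⟨fun h => h.trans hlt, fun hrq => ?_⟩⟩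
  have heq : insert p (A.filter fun r => d r < d p) = A.filter fun r => d r < d q := by
    refine Finset.eq_of_subset_of_card_le ?_ ?_
    · intro s hs
      simp only [Finset.mem_insert, Finset.mem_filter] at hs ⊢
      rcases hs with rfl | hs
      · exact ⟨hp, hlt⟩
      · exact ⟨hs.1, hs.2.trans hlt⟩
    · rw [Finset.card_insert_of_notMem (by simp)]
      exact h.le
  have hmem : r ∈ insert p (A.filter fun r => d r < d p) := by
    rw [heq]
    simp [hr, hrq]
  simpa [hrp, hr] using hmem

/-- KNN-ADS, Case 2: if `c_i = c_{i+1} = c < K`, then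
`φ(q_i) − φ(q_{i+1}) = ((1[y(q_i)=y_test] − 1[y(q_{i+1})=y_test])/K) · (min(K−c, i)/i)`. -/
theorem knn_ads_case2 [Inhabited β] [DecidableEq β] [DecidableEq L]
    (K : ℕ) (hK : 1 ≤ K) (ytest : L) (y : β → L) (d : β → ℝ)
    (P C : Finset β) (hPC : Disjoint P C)
    (hinj : Set.InjOn d ↑(P ∪ C))
    (m : ℕ) (hm : m = C.card)
    (i : ℕ) (hi1 : 1 ≤ i) (hi : i ≤ m - 1)
    (c : ℕ)
    (hci : (P.filter (fun p => d p < d (nthNearest d C i))).card = c)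
    (hci1 : (P.filter (fun p => d p < d (nthNearest d C (i + 1)))).card = c)
    (hcK : c < K) :
    adsKnn K ytest y d P C (nthNearest d C i) -
        adsKnn K ytest y d P C (nthNearest d C (i + 1)) =
      (((if y (nthNearest d C i) = ytest then (1 : ℝ) else 0) -
          (if y (nthNearest d C (i + 1)) = ytest then (1 : ℝ) else 0)) / K) *
        ((min (K - c) i : ℕ) / (i : ℝ)) := by
  subst hm
  obtain ⟨j, rfl⟩ : ∃ j, i = j + 1 := ⟨i - 1, by omega⟩
  have hinjC : Set.InjOn d ↑C := hinj.mono (by simp)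
  have haC := nthNearest_succ_mem d (A := C) (j := j) (by omega)
  have hbC := nthNearest_succ_mem d (A := C) (j := j + 1) (by omega)
  have hra := distRank_nthNearest_succ hinjC (j := j) (by omega)
  have hrb := distRank_nthNearest_succ hinjC (j := j + 1) (by omega)
  generalize nthNearest d C (j + 1) = a at *
  generalize nthNearest d C (j + 1 + 1) = b at *
  obtain ⟨hlt, hsepC⟩ := lt_iff_of_distRank_succ haC (hrb.trans (congrArg (· + 1) hra.symm))
  have hab : a ≠ b := fun h => hlt.ne (congrArg d h)
  have hsepP : ∀ r ∈ P, d r < d a ↔ d r < d b := by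
    have heq := Finset.eq_of_subset_of_card_le
      (Finset.monotone_filter_right P fun r _ (hr : d r < d a) => hr.trans hlt)
      (hci1.trans hci.symm).le
    intro r hr
    simpa [hr] using Finset.ext_iff.mp heq r
  obtain ⟨D, haD, hbD, rfl⟩ : ∃ D, a ∉ D ∧ b ∉ D ∧ C = insert a (insert b D) :=
    ⟨(C.erase a).erase b, by simp, by simp, by
      rw [Finset.insert_erase (by simp [hab.symm, hbC]), Finset.insert_erase haC]⟩
  have haP : a ∉ P := fun h => Finset.disjoint_left.mp hPC h haC
  have hbP : b ∉ P := fun h => Finset.disjoint_left.mp hPC h hbC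
  have hDP : Disjoint P D := hPC.mono_right fun x hx => by simp [hx]
  set A := D.filter fun q => d q < d a with hA
  have hAcard : A.card = j := by
    rw [← hra, distRank_insert (by simp [hab, haD]), distRank_insert hbD]
    simp [hlt.not_gt, hA, distRank]
  have hswap : ∀ T ∈ D.powerset,
      vknn K ytest y d (insert a (P ∪ T)) - vknn K ytest y d (insert b (P ∪ T)) =
      (((if y a = ytest then (1 : ℝ) else 0) - (if y b = ytest then (1 : ℝ) else 0)) / K) *
        if (T ∩ A).card < K - c then 1 else 0 := by
    intro T hT
    have hT := Finset.mem_powerset.mp hT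
    have hrank : distRank d (P ∪ T) a = c + (T ∩ A).card := by
      rw [distRank, Finset.filter_union, Finset.card_union_of_disjoint
        (Finset.disjoint_filter_filter (hDP.mono_right hT)), hci, hA, Finset.inter_filter,
        Finset.inter_eq_left.mpr hT]
    rw [vknn_insert_sub_vknn_insert K ytest y, hrank]
    · simp only [Nat.lt_sub_iff_add_lt']
    · simpa [haP] using fun h => haD (hT h)
    · simpa [hbP] using fun h => hbD (hT h)
    · refine hinj.mono fun x hx => ?_
      have := @hT x
      simp only [Finset.coe_insert, Finset.coe_union, Set.mem_insert_iff, Set.mem_union,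
        Finset.mem_coe] at hx ⊢
      tauto
    · refine hinj.mono fun x hx => ?_
      have := @hT x
      simp only [Finset.coe_insert, Finset.coe_union, Set.mem_insert_iff, Set.mem_union,
        Finset.mem_coe] at hx ⊢
      tauto
    · intro q hq
      rcases Finset.mem_union.mp hq with hq | hq
      · exact hsepP q hq
      · exact hsepC q (by simp [hT hq]) fun h => haD (h ▸ hT hq)
  have hsplit := sum_shapleyWeight_union A (D \ A) Finset.disjoint_sdiff
    (fun T => if T.card < K - c then (1 : ℝ) else 0)
  rw [Finset.union_sdiff_of_subset (Finset.filter_subset _ _),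
    sum_powerset_shapleyWeight A (fun t => if t < K - c then (1 : ℝ) else 0), hAcard] at hsplit
  have hcount : ∑ t ∈ Finset.range (j + 1), (if t < K - c then (1 : ℝ) else 0) =
      (min (K - c) (j + 1) : ℕ) := by
    rw [Finset.sum_boole, ← Finset.card_range (min (K - c) (j + 1))]
    congr 2
    ext t
    simp only [Finset.mem_filter, Finset.mem_range]
    omega
  rw [adsKnn_sub_adsKnn K ytest y d P D hab haD hbD]
  rw [Finset.sum_congr rfl fun T hT => by rw [hswap T hT, mul_left_comm], ← Finset.mul_sum,
    hsplit, hcount]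
  push_cast
  rfl
end
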